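/- arXiv:2405.12763 — 2 statements merged into one kernel-verified Lean document; each statement's English description precedes it below -/
import Mathlib

section
/- Let S be a non-negatively graded commutative Noetherian ring, generated as an algebra over S^0 by homogeneous elements x_1, …, x_t of positive degrees, and set d = lcm{deg(x_1), …, deg(x_t)}. Let M be a finitely generated non-negatively graded S-module such that each graded component M^n has finite length as an S^0-module. Then there exist polynomials g_1(y), …, g_d(y) with complex coefficients and an integer N such that for every n ≥ N, if n ≡ i (mod d) with 1 ≤ i ≤ d, then the length of M^n over S^0 equals g_i(n). -/
/-- Eventually quasi-polynomial functions of period `d`. -/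
def EvQuasi (d : ℕ) (f : ℕ → ℂ) : Prop :=
  ∃ (g : ℕ → Polynomial ℂ) (N : ℕ), ∀ n ≥ N, f n = (g (n % d)).eval (n : ℂ)

theorem EvQuasi.sub {d : ℕ} {f₁ f₂ : ℕ → ℂ} (h₁ : EvQuasi d f₁) (h₂ : EvQuasi d f₂) :
    EvQuasi d (fun n => f₁ n - f₂ n) := by
  obtain ⟨g₁, N₁, h₁⟩ := h₁
  obtain ⟨g₂, N₂, h₂⟩ := h₂
  refine ⟨fun r => g₁ r - g₂ r, max N₁ N₂, fun n hn => ?_⟩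
  simp [h₁ n (le_trans (le_max_left _ _) hn), h₂ n (le_trans (le_max_right _ _) hn)]

theorem EvQuasi.add {d : ℕ} {f₁ f₂ : ℕ → ℂ} (h₁ : EvQuasi d f₁) (h₂ : EvQuasi d f₂) :
    EvQuasi d (fun n => f₁ n + f₂ n) := by
  obtain ⟨g₁, N₁, h₁⟩ := h₁
  obtain ⟨g₂, N₂, h₂⟩ := h₂
  refine ⟨fun r => g₁ r + g₂ r, max N₁ N₂, fun n hn => ?_⟩
  simp [h₁ n (le_trans (le_max_left _ _) hn), h₂ n (le_trans (le_max_right _ _) hn)]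

theorem EvQuasi.zero {d : ℕ} : EvQuasi d (fun _ => 0) := ⟨fun _ => 0, 0, by simp⟩

theorem EvQuasi.congr {d : ℕ} {f₁ f₂ : ℕ → ℂ} (h₁ : EvQuasi d f₁) (N : ℕ)
    (h : ∀ n ≥ N, f₂ n = f₁ n) : EvQuasi d f₂ := by
  obtain ⟨g₁, N₁, h₁⟩ := h₁
  refine ⟨g₁, max N₁ N, fun n hn => ?_⟩
  rw [h n (le_trans (le_max_right _ _) hn), h₁ n (le_trans (le_max_left _ _) hn)]

theorem EvQuasi.shift {d : ℕ} {f : ℕ → ℂ} (h : EvQuasi d f) (e : ℕ) :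
    EvQuasi d (fun n => f (n + e)) := by
  obtain ⟨g, N, h⟩ := h
  refine ⟨fun r => (g ((r + e) % d)).comp (Polynomial.X + Polynomial.C (e : ℂ)), N,
    fun n hn => ?_⟩
  simp [h (n + e) (by omega), Polynomial.eval_comp]

theorem exists_antidiff (p : Polynomial ℂ) :
    ∃ P : Polynomial ℂ, ∀ m : ℕ, P.eval ((m : ℂ) + 1) - P.eval (m : ℂ) = p.eval (m : ℂ) := by
  induction p using Polynomial.induction_on' with
  | add p q hp hq =>
    obtain ⟨P, hP⟩ := hp
    obtain ⟨Q, hQ⟩ := hq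
    refine ⟨P + Q, fun m => ?_⟩
    rw [Polynomial.eval_add, Polynomial.eval_add, Polynomial.eval_add, ← hP, ← hQ]
    ring
  | monomial n a =>
    refine ⟨Polynomial.C (a / (n + 1)) *
      (Polynomial.bernoulli (n + 1)).map (algebraMap ℚ ℂ), fun m => ?_⟩
    have h := congrArg (fun q => (q.map (algebraMap ℚ ℂ)).eval (m : ℂ))
      (Polynomial.bernoulli_comp_one_add_X (n + 1))
    simp only [Polynomial.map_comp, Polynomial.eval_comp, Polynomial.map_add, Polynomial.map_one,
      Polynomial.map_X, Polynomial.eval_add, Polynomial.eval_one, Polynomial.eval_X,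
      nsmul_eq_mul, Polynomial.map_mul, Polynomial.map_natCast, Polynomial.map_pow,
      Polynomial.eval_mul, Polynomial.eval_natCast, Polynomial.eval_pow,
      Nat.add_sub_cancel] at h
    rw [add_comm (m : ℂ) 1, Polynomial.eval_mul, Polynomial.eval_mul, Polynomial.eval_C,
      Polynomial.eval_C, h, Polynomial.eval_monomial]
    have : (n : ℂ) + 1 ≠ 0 := by exact_mod_cast n.succ_ne_zero
    push_cast
    field_simp
    ring

theorem EvQuasi.of_diff {d : ℕ} (hd : 0 < d) {f : ℕ → ℂ}
    (h : EvQuasi d (fun n => f (n + d) - f n)) : EvQuasi d f := by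
  obtain ⟨u, N, h⟩ := h
  have key : ∀ r : ℕ, ∃ G : Polynomial ℂ, r < d → ∀ m ≥ N,
      f (r + d * m) = G.eval ((r + d * m : ℕ) : ℂ) := by
    intro r
    obtain ⟨P, hP⟩ := exists_antidiff
      ((u r).comp (Polynomial.C (r : ℂ) + Polynomial.C (d : ℂ) * Polynomial.X))
    refine ⟨P.comp (Polynomial.C (d : ℂ)⁻¹ * (Polynomial.X - Polynomial.C (r : ℂ))) +
      Polynomial.C (f (r + d * N) - P.eval (N : ℂ)), fun hr m hm => ?_⟩
    have hd' : (d : ℂ) ≠ 0 := by exact_mod_cast hd.ne'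
    have e1 : ((d : ℂ)⁻¹ * (((r + d * m : ℕ) : ℂ) - (r : ℂ))) = m := by
      push_cast; field_simp; ring
    rw [Polynomial.eval_add, Polynomial.eval_comp, Polynomial.eval_C, Polynomial.eval_mul,
      Polynomial.eval_C, Polynomial.eval_sub, Polynomial.eval_X, Polynomial.eval_C, e1]
    induction m, hm using Nat.le_induction with
    | base => ring
    | succ m hm ih =>
      have e1 : ((d : ℂ)⁻¹ * (((r + d * m : ℕ) : ℂ) - (r : ℂ))) = m := by
        push_cast; field_simp; ring
      have h1 := h (r + d * m) (by nlinarith)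
      have h2 := hP m
      rw [Nat.add_mul_mod_self_left, Nat.mod_eq_of_lt hr] at h1
      simp only [Polynomial.eval_comp, Polynomial.eval_add, Polynomial.eval_mul,
        Polynomial.eval_C, Polynomial.eval_X] at h2
      push_cast at h1 ⊢
      rw [← h2, ih e1] at h1
      rw [show r + d * (m + 1) = r + d * m + d by ring]
      linear_combination h1
  choose G hG using key
  refine ⟨G, d * N + d, fun n hn => ?_⟩
  have h1 : N ≤ n / d := by
    rw [Nat.le_div_iff_mul_le hd]; nlinarith
  have := hG (n % d) (Nat.mod_lt _ hd) (n / d) h1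
  rwa [Nat.mod_add_div] at this

theorem EvQuasi.of_diff_dvd {d e : ℕ} (hd : 0 < d) (hed : e ∣ d) {f : ℕ → ℂ}
    (h : EvQuasi d (fun n => f (n + e) - f n)) : EvQuasi d f := by
  obtain ⟨k, rfl⟩ := hed
  apply EvQuasi.of_diff hd
  suffices ∀ j : ℕ, EvQuasi (e * k) (fun n => f (n + e * j) - f n) from this k
  intro j
  induction j with
  | zero => simpa using EvQuasi.zero
  | succ j ih =>
    refine ((h.shift (e * j)).add ih).congr 0 fun n _ => ?_
    rw [show n + e * (j + 1) = n + e * j + e by ring]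
    ring

theorem length_map_sup {R M : Type*} [CommRing R] [AddCommGroup M] [Module R M]
    (φ : M →ₗ[R] M) (A P : Submodule R M) :
    Module.length R A + Module.length R P =
      Module.length R (A ⊓ P.comap φ : Submodule R M) +
      Module.length R (A.map φ ⊔ P : Submodule R M) := by
  let f : (A × P) →ₗ[R] M := (φ ∘ₗ A.subtype).coprod P.subtype
  let g : (A ⊓ P.comap φ : Submodule R M) →ₗ[R] (A × P) :=
    LinearMap.prod (Submodule.inclusion inf_le_left)
      (-((φ ∘ₗ (A ⊓ P.comap φ : Submodule R M).subtype).codRestrict P (fun k => k.2.2)))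
  have hr : LinearMap.range f = A.map φ ⊔ P := by
    rw [LinearMap.range_coprod, LinearMap.range_comp, Submodule.range_subtype,
      Submodule.range_subtype]
  rw [← Module.length_prod, ← hr]
  refine Module.length_eq_add_of_exact g f.rangeRestrict ?_ f.surjective_rangeRestrict ?_
  · intro a b hab
    have := congrArg (fun z => (z.1 : M)) hab
    exact Subtype.ext this
  · rintro ⟨a, p⟩
    have e1 : f.rangeRestrict (a, p) = 0 ↔ φ a + p = 0 := by
      rw [← Subtype.coe_inj]; rfl
    rw [e1]
    constructor
    · intro h
      refine ⟨⟨a, a.2, ?_⟩, ?_⟩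
      · have : φ a = -p := eq_neg_of_add_eq_zero_left h
        simp [this]
      · refine Prod.ext (Subtype.ext rfl) (Subtype.ext ?_)
        change -(φ a) = p
        exact (eq_neg_of_add_eq_zero_right h).symm
    · rintro ⟨k, hk⟩
      have h1 : (k : M) = a := congrArg (fun z => (z.1 : M)) hk
      have h2 : -(φ k) = (p : M) := congrArg (fun z => (z.2 : M)) hk
      rw [← h1, ← h2]; simp

/-- The degree `n` part of an `S`-submodule, as an `S0`-submodule. -/
def gpart {S M : Type*} [CommRing S] [AddCommGroup M] [Module S M]
    {S0 : Subring S} (ℳ : ℕ → Submodule S0 M) (Q : Submodule S M) (n : ℕ) : Submodule S0 M :=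
  Q.restrictScalars S0 ⊓ ℳ n

/-- The length of the degree `n` part. -/
noncomputable def glen {S M : Type*} [CommRing S] [AddCommGroup M] [Module S M]
    {S0 : Subring S} (ℳ : ℕ → Submodule S0 M) (Q : Submodule S M) (n : ℕ) : ℂ :=
  ((Module.length S0 (gpart ℳ Q n)).toNat : ℂ)

/-- Homogeneous submodules. -/
def HomogSub {S M : Type*} [CommRing S] [AddCommGroup M] [Module S M]
    {S0 : Subring S} (ℳ : ℕ → Submodule S0 M) [DirectSum.Decomposition ℳ]
    (Q : Submodule S M) : Prop :=
  ∀ q ∈ Q, ∀ n : ℕ, (DirectSum.decompose ℳ q n : M) ∈ Q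

theorem decompose_smul_shift {S M : Type*} [CommRing S] [AddCommGroup M] [Module S M]
    (𝒜 : ℕ → AddSubgroup S) {S0 : Subring S}
    (ℳ : ℕ → Submodule S0 M) [SetLike.GradedSMul 𝒜 ℳ] [DirectSum.Decomposition ℳ]
    {x : S} {e : ℕ} (hx : x ∈ 𝒜 e) (q : M) (n : ℕ) :
    (DirectSum.decompose ℳ (x • q) (n + e) : M) = x • (DirectSum.decompose ℳ q n : M) := by
  induction q using DirectSum.Decomposition.inductionOn ℳ with
  | zero => simp
  | @homogeneous i m =>
    have h : x • (m : M) ∈ ℳ (e + i) := SetLike.GradedSMul.smul_mem hx m.2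
    by_cases hi : i = n
    · subst hi
      rw [add_comm] at h
      rw [DirectSum.decompose_of_mem_same ℳ h, DirectSum.decompose_of_mem_same ℳ m.2]
    · rw [DirectSum.decompose_of_mem_ne ℳ h (by omega), DirectSum.decompose_of_mem_ne ℳ m.2 hi,
        smul_zero]
  | add a b ha hb =>
    rw [smul_add, DirectSum.decompose_add, DirectSum.decompose_add, DirectSum.add_apply,
      DirectSum.add_apply, Submodule.coe_add, Submodule.coe_add, ha, hb, smul_add]

theorem decompose_smul_shift_lt {S M : Type*} [CommRing S] [AddCommGroup M] [Module S M]
    (𝒜 : ℕ → AddSubgroup S) {S0 : Subring S}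
    (ℳ : ℕ → Submodule S0 M) [SetLike.GradedSMul 𝒜 ℳ] [DirectSum.Decomposition ℳ]
    {x : S} {e : ℕ} (hx : x ∈ 𝒜 e) (q : M) (n : ℕ) (hn : n < e) :
    (DirectSum.decompose ℳ (x • q) n : M) = 0 := by
  induction q using DirectSum.Decomposition.inductionOn ℳ with
  | zero => simp
  | @homogeneous i m =>
    have h : x • (m : M) ∈ ℳ (e + i) := SetLike.GradedSMul.smul_mem hx m.2
    rw [DirectSum.decompose_of_mem_ne ℳ h (by omega)]
  | add a b ha hb =>
    rw [smul_add, DirectSum.decompose_add, DirectSum.add_apply, Submodule.coe_add, ha, hb,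
      add_zero]

theorem glen_spec {S M : Type*} [CommRing S] [AddCommGroup M] [Module S M]
    {S0 : Subring S} (ℳ : ℕ → Submodule S0 M)
    (hlen : ∀ n : ℕ, IsFiniteLength S0 (ℳ n)) (Q : Submodule S M) (n : ℕ) :
    Module.length S0 (gpart ℳ Q n) ≠ ⊤ := by
  have h1 : Module.length S0 (ℳ n) ≠ ⊤ := Module.length_ne_top_iff.2 (hlen n)
  have h2 : Module.length S0 (gpart ℳ Q n) ≤ Module.length S0 (ℳ n) :=
    Module.length_le_of_injective (Submodule.inclusion inf_le_right)
      (Submodule.inclusion_injective _)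
  exact ne_top_of_le_ne_top h1 h2

/-- The kernel of multiplication by `x` on `Q / P`. -/
def kerSub {S M : Type*} [CommRing S] [AddCommGroup M] [Module S M]
    (x : S) (Q P : Submodule S M) : Submodule S M :=
  Q ⊓ P.comap (LinearMap.lsmul S M x)

/-- The image of multiplication by `x` on `Q / P`. -/
def imSub {S M : Type*} [CommRing S] [AddCommGroup M] [Module S M]
    (x : S) (Q P : Submodule S M) : Submodule S M :=
  Q.map (LinearMap.lsmul S M x) ⊔ P

theorem mem_kerSub {S M : Type*} [CommRing S] [AddCommGroup M] [Module S M]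
    {x : S} {Q P : Submodule S M} {m : M} : m ∈ kerSub x Q P ↔ m ∈ Q ∧ x • m ∈ P := Iff.rfl

theorem mem_imSub {S M : Type*} [CommRing S] [AddCommGroup M] [Module S M]
    {x : S} {Q P : Submodule S M} {m : M} :
    m ∈ imSub x Q P ↔ ∃ q ∈ Q, ∃ p ∈ P, x • q + p = m := by
  unfold imSub
  rw [Submodule.mem_sup]
  constructor
  · rintro ⟨_, ⟨q, hq, rfl⟩, p, hp, h⟩
    exact ⟨q, hq, p, hp, h⟩
  · rintro ⟨q, hq, p, hp, h⟩
    exact ⟨_, ⟨q, hq, rfl⟩, p, hp, h⟩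

theorem glen_rel {S M : Type*} [CommRing S] [AddCommGroup M] [Module S M]
    (𝒜 : ℕ → AddSubgroup S) {S0 : Subring S}
    (ℳ : ℕ → Submodule S0 M) [SetLike.GradedSMul 𝒜 ℳ] [DirectSum.Decomposition ℳ]
    (hlen : ∀ n : ℕ, IsFiniteLength S0 (ℳ n))
    {x : S} {e : ℕ} (hx : x ∈ 𝒜 e) (Q P : Submodule S M)
    (hQ : HomogSub ℳ Q) (hP : HomogSub ℳ P) (n : ℕ) :
    glen ℳ Q n + glen ℳ P (n + e) =
      glen ℳ (kerSub x Q P) n + glen ℳ (imSub x Q P) (n + e) := by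
  have hxm : ∀ m ∈ ℳ n, x • m ∈ ℳ (n + e) := fun m hm => by
    rw [add_comm]; exact SetLike.GradedSMul.smul_mem hx hm
  let φ : M →ₗ[S0] M := (LinearMap.lsmul S M x).restrictScalars S0
  have h := length_map_sup φ (gpart ℳ Q n) (gpart ℳ P (n + e))
  have e1 : gpart ℳ Q n ⊓ (gpart ℳ P (n + e)).comap φ = gpart ℳ (kerSub x Q P) n := by
    ext m
    constructor
    · rintro ⟨⟨h1, h2⟩, h3, h4⟩
      exact ⟨⟨h1, h3⟩, h2⟩
    · rintro ⟨⟨h1, h3⟩, h2⟩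
      exact ⟨⟨h1, h2⟩, h3, hxm _ h2⟩
  have e2 : (gpart ℳ Q n).map φ ⊔ gpart ℳ P (n + e) = gpart ℳ (imSub x Q P) (n + e) := by
    ext m
    rw [Submodule.mem_sup]
    constructor
    · rintro ⟨_, ⟨q, ⟨hq, hq'⟩, rfl⟩, p, ⟨hp, hp'⟩, rfl⟩
      exact ⟨mem_imSub.2 ⟨q, hq, p, hp, rfl⟩, add_mem (hxm _ hq') hp'⟩
    · rintro ⟨h1, h2⟩
      obtain ⟨q, hq, p, hp, rfl⟩ := mem_imSub.1 h1
      refine ⟨_, ⟨(DirectSum.decompose ℳ q n : M), ⟨hQ q hq n, SetLike.coe_mem _⟩, rfl⟩,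
        (DirectSum.decompose ℳ p (n + e) : M), ⟨hP p hp _, SetLike.coe_mem _⟩, ?_⟩
      have h3 := DirectSum.decompose_of_mem_same ℳ h2
      rw [DirectSum.decompose_add, DirectSum.add_apply, Submodule.coe_add,
        decompose_smul_shift 𝒜 ℳ hx] at h3
      exact h3
  rw [e1, e2] at h
  have h' := congrArg ENat.toNat h
  rw [ENat.toNat_add (glen_spec ℳ hlen _ _) (glen_spec ℳ hlen _ _),
    ENat.toNat_add (glen_spec ℳ hlen _ _) (glen_spec ℳ hlen _ _)] at h'
  unfold glen
  exact_mod_cast h'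

theorem homog_kerSub {S M : Type*} [CommRing S] [AddCommGroup M] [Module S M]
    (𝒜 : ℕ → AddSubgroup S) {S0 : Subring S}
    (ℳ : ℕ → Submodule S0 M) [SetLike.GradedSMul 𝒜 ℳ] [DirectSum.Decomposition ℳ]
    {x : S} {e : ℕ} (hx : x ∈ 𝒜 e) (Q P : Submodule S M)
    (hQ : HomogSub ℳ Q) (hP : HomogSub ℳ P) : HomogSub ℳ (kerSub x Q P) := by
  rintro q ⟨hq, hq'⟩ n
  refine ⟨hQ q hq n, ?_⟩
  change x • (DirectSum.decompose ℳ q n : M) ∈ P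
  rw [← decompose_smul_shift 𝒜 ℳ hx]
  exact hP _ hq' _

theorem homog_imSub {S M : Type*} [CommRing S] [AddCommGroup M] [Module S M]
    (𝒜 : ℕ → AddSubgroup S) {S0 : Subring S}
    (ℳ : ℕ → Submodule S0 M) [SetLike.GradedSMul 𝒜 ℳ] [DirectSum.Decomposition ℳ]
    {x : S} {e : ℕ} (hx : x ∈ 𝒜 e) (Q P : Submodule S M)
    (hQ : HomogSub ℳ Q) (hP : HomogSub ℳ P) : HomogSub ℳ (imSub x Q P) := by
  intro m hm n
  obtain ⟨q, hq, p, hp, rfl⟩ := mem_imSub.1 hm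
  rw [DirectSum.decompose_add, DirectSum.add_apply, Submodule.coe_add]
  rcases lt_or_ge n e with h | h
  · rw [decompose_smul_shift_lt 𝒜 ℳ hx q n h, zero_add]
    exact mem_imSub.2 ⟨0, zero_mem _, _, hP p hp n, by simp⟩
  · obtain ⟨k, rfl⟩ := Nat.exists_eq_add_of_le' h
    rw [decompose_smul_shift 𝒜 ℳ hx]
    exact mem_imSub.2 ⟨_, hQ q hq k, _, hP p hp _, rfl⟩

theorem base_case {S M : Type*} [CommRing S] [AddCommGroup M] [Module S M]
    [IsNoetherian S M] {S0 : Subring S}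
    (ℳ : ℕ → Submodule S0 M) [DirectSum.Decomposition ℳ]
    {t : ℕ} (x : Fin t → S)
    (hgen : Subring.closure ((S0 : Set S) ∪ Set.range x) = ⊤)
    (Q P : Submodule S M) (hP : HomogSub ℳ P) (hPQ : P ≤ Q)
    (hx : ∀ i, ∀ q ∈ Q, x i • q ∈ P) :
    ∃ N : ℕ, ∀ n ≥ N, gpart ℳ Q n = gpart ℳ P n := by
  have hS : ∀ s : S, ∃ s0 : S0, ∀ q ∈ Q, s • q - s0 • q ∈ P := by
    intro s
    have hs : s ∈ Subring.closure ((S0 : Set S) ∪ Set.range x) := by rw [hgen]; trivial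
    induction hs using Subring.closure_induction with
    | mem y hy =>
      rcases hy with hy | ⟨i, rfl⟩
      · exact ⟨⟨y, hy⟩, fun q _ => by simp [Subring.smul_def]⟩
      · exact ⟨0, fun q hq => by simpa using hx i q hq⟩
    | zero => exact ⟨0, fun q _ => by simp⟩
    | one => exact ⟨1, fun q _ => by simp⟩
    | add a b _ _ ha hb =>
      obtain ⟨a0, ha⟩ := ha
      obtain ⟨b0, hb⟩ := hb
      refine ⟨a0 + b0, fun q hq => ?_⟩
      have := add_mem (ha q hq) (hb q hq)
      rw [add_smul, add_smul, add_sub_add_comm]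
      exact this
    | neg a _ ha =>
      obtain ⟨a0, ha⟩ := ha
      refine ⟨-a0, fun q hq => ?_⟩
      have := neg_mem (ha q hq)
      rw [neg_smul, neg_smul]
      convert this using 1
      abel
    | mul a b _ _ ha hb =>
      obtain ⟨a0, ha⟩ := ha
      obtain ⟨b0, hb⟩ := hb
      refine ⟨a0 * b0, fun q hq => ?_⟩
      have h1 := P.smul_mem a (hb q hq)
      have h2 := ha (b0 • q) (Q.smul_mem (b0 : S) hq)
      have := add_mem h1 h2
      rw [mul_smul, mul_smul]
      rwa [smul_sub, sub_add_sub_cancel] at this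
  obtain ⟨T, hT⟩ := (IsNoetherian.noetherian Q : Q.FG)
  have hN : ∃ N : ℕ, ∀ q ∈ T, ∀ n ≥ N, (DirectSum.decompose ℳ q n : M) = 0 := by
    classical
    refine ⟨T.sup (fun q => (DirectSum.decompose ℳ q).support.sup id) + 1,
      fun q hq n hn => ?_⟩
    by_contra hne
    have h1 : n ∈ (DirectSum.decompose ℳ q).support := by
      rw [DFinsupp.mem_support_iff]
      intro h; exact hne (by rw [h]; rfl)
    have h2 : n ≤ (DirectSum.decompose ℳ q).support.sup id := Finset.le_sup (f := id) h1
    have h3 := Finset.le_sup (f := fun q => (DirectSum.decompose ℳ q).support.sup id) hq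
    simp only at h3
    omega
  obtain ⟨N, hN⟩ := hN
  have hall : ∀ q ∈ Submodule.span S (T : Set M),
      ∀ n ≥ N, (DirectSum.decompose ℳ q n : M) ∈ P := by
    intro q hq
    induction hq using Submodule.span_induction with
    | mem q hq => intro n hn; rw [hN q hq n hn]; exact zero_mem _
    | zero => intro n hn; simp
    | add a b _ _ ha hb =>
      intro n hn
      rw [DirectSum.decompose_add, DirectSum.add_apply, Submodule.coe_add]
      exact add_mem (ha n hn) (hb n hn)
    | smul s q hq ih =>
      intro n hn
      obtain ⟨s0, hs⟩ := hS s
      rw [hT] at hq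
      have h1 := hP _ (hs q hq) n
      have h2 : s0 • (DirectSum.decompose ℳ q n : M) ∈ P := P.smul_mem (s0 : S) (ih n hn)
      have h3 := add_mem h1 h2
      rw [DirectSum.decompose_sub, DirectSum.sub_apply, Submodule.coe_sub,
        DirectSum.decompose_smul, DirectSum.smul_apply, Submodule.coe_smul,
        sub_add_cancel] at h3
      exact h3
  refine ⟨N, fun n hn => le_antisymm ?_ ?_⟩
  · rintro q ⟨hq, hq'⟩
    refine ⟨?_, hq'⟩
    have hq2 : q ∈ Submodule.span S (T : Set M) := by rw [hT]; exact hq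
    have := hall q hq2 n hn
    rwa [DirectSum.decompose_of_mem_same ℳ hq'] at this
  · rintro q ⟨hq, hq'⟩
    exact ⟨hPQ hq, hq'⟩

theorem main_induction {S M : Type*} [CommRing S] [AddCommGroup M] [Module S M]
    [IsNoetherian S M] (𝒜 : ℕ → AddSubgroup S) {S0 : Subring S}
    (ℳ : ℕ → Submodule S0 M) [SetLike.GradedSMul 𝒜 ℳ] [DirectSum.Decomposition ℳ]
    (hlen : ∀ n : ℕ, IsFiniteLength S0 (ℳ n))
    {t : ℕ} (x : Fin t → S) (dx : Fin t → ℕ)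
    (hxdeg : ∀ i, x i ∈ 𝒜 (dx i))
    (hgen : Subring.closure ((S0 : Set S) ∪ Set.range x) = ⊤)
    (d : ℕ) (hd : 0 < d) (hdvd : ∀ i, dx i ∣ d) (k : ℕ) :
    ∀ (Q P : Submodule S M), HomogSub ℳ Q → HomogSub ℳ P → P ≤ Q →
      (∀ i : Fin t, k ≤ i → ∀ q ∈ Q, x i • q ∈ P) →
      EvQuasi d (fun n => glen ℳ Q n - glen ℳ P n) := by
  induction k with
  | zero =>
    intro Q P hQ hP hPQ hx
    obtain ⟨N, hN⟩ := base_case ℳ x hgen Q P hP hPQ (fun i => hx i (Nat.zero_le _))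
    refine EvQuasi.zero.congr N fun n hn => ?_
    unfold glen
    rw [hN n hn, sub_self]
  | succ k ih =>
    intro Q P hQ hP hPQ hx
    by_cases hk : k < t
    · let j : Fin t := ⟨k, hk⟩
      have hcase : ∀ i : Fin t, k ≤ i → i = j ∨ k + 1 ≤ i := by
        intro i hi
        rcases hi.eq_or_lt with h | h
        · exact Or.inl (Fin.ext h.symm)
        · exact Or.inr h
      have h1 := ih (kerSub (x j) Q P) P (homog_kerSub 𝒜 ℳ (hxdeg j) Q P hQ hP) hP
        (fun p hp => ⟨hPQ hp, P.smul_mem _ hp⟩) (fun i hi q hq => by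
          rcases hcase i hi with rfl | h
          · exact hq.2
          · exact hx i h q hq.1)
      have h2 := ih Q (imSub (x j) Q P) hQ (homog_imSub 𝒜 ℳ (hxdeg j) Q P hQ hP)
        (fun m hm => by
          obtain ⟨q, hq, p, hp, rfl⟩ := mem_imSub.1 hm
          exact add_mem (Q.smul_mem _ hq) (hPQ hp)) (fun i hi q hq => by
          rcases hcase i hi with rfl | h
          · exact mem_imSub.2 ⟨q, hq, 0, zero_mem _, by simp⟩
          · exact mem_imSub.2 ⟨0, zero_mem _, _, hx i h q hq, by simp⟩)
      refine EvQuasi.of_diff_dvd hd (hdvd j) (((h2.shift (dx j)).sub h1).congr 0 fun n _ => ?_)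
      have := glen_rel 𝒜 ℳ hlen (hxdeg j) Q P hQ hP n
      linear_combination -this
    · exact ih Q P hQ hP hPQ (fun i hi => absurd i.2 (by omega))



/-- Hilbert–Serre.  Let `S` be a non-negatively graded commutative
Noetherian ring, generated as an algebra over `S⁰` by homogeneous elements
`x 1, …, x t` of positive degrees, and set `d = lcm (deg x i)`.  Let `M` be a finitely
generated non-negatively graded `S`-module each of whose graded components `ℳ n` has
finite length over the degree-zero subring `S0`.  Then there are complex polynomials
`g 0, …, g (d-1)` and an integer `N` such that for `n ≥ N` the length of `ℳ n` over
`S0` equals `g (n % d)` evaluated at `n` (the length is expressed as the length of any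
composition series of `ℳ n`). -/
theorem stmt_5 {S M : Type*} [CommRing S] [AddCommGroup M] [Module S M]
    (𝒜 : ℕ → AddSubgroup S) [GradedRing 𝒜] [IsNoetherianRing S]
    (S0 : Subring S) (hS0 : (S0 : Set S) = (𝒜 0 : Set S))
    (ℳ : ℕ → Submodule S0 M) [SetLike.GradedSMul 𝒜 ℳ] [DirectSum.Decomposition ℳ]
    [Module.Finite S M]
    (hlen : ∀ n : ℕ, IsFiniteLength S0 (ℳ n))
    {t : ℕ} (x : Fin t → S) (dx : Fin t → ℕ) (hdx : ∀ i, 0 < dx i)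
    (hxdeg : ∀ i, x i ∈ 𝒜 (dx i))
    (hgen : Subring.closure ((𝒜 0 : Set S) ∪ Set.range x) = ⊤) :
    ∃ (g : ℕ → Polynomial ℂ) (N : ℕ), ∀ n ≥ N,
      ∃ s : CompositionSeries (Submodule S0 (ℳ n)),
        s.head = ⊥ ∧ s.last = ⊤ ∧
        (g (n % Finset.univ.lcm dx)).eval (n : ℂ) = (s.length : ℂ) := by

  have : IsNoetherian S M := isNoetherian_of_isNoetherianRing_of_finite S M
  rw [← hS0] at hgen
  have hd : 0 < Finset.univ.lcm dx := by
    rw [Nat.pos_iff_ne_zero, Ne, Finset.lcm_eq_zero_iff]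
    rintro ⟨i, _, hi⟩
    exact (hdx i).ne' hi
  obtain ⟨g, N, h⟩ := main_induction 𝒜 ℳ hlen x dx hxdeg hgen _ hd
    (fun i => Finset.dvd_lcm (Finset.mem_univ i)) t ⊤ ⊥ (fun _ _ _ => trivial)
    (fun q hq n => by
      rw [Submodule.mem_bot] at hq ⊢
      rw [hq]; simp) bot_le (fun i hi => absurd i.2 (by omega))
  refine ⟨g, N, fun n hn => ?_⟩
  obtain ⟨s, hs1, hs2⟩ := isFiniteLength_iff_exists_compositionSeries.1 (hlen n)
  refine ⟨s, hs1, hs2, ?_⟩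
  rw [← h n hn]
  have e1 : gpart ℳ (⊤ : Submodule S M) n = ℳ n := by
    ext m; exact ⟨fun h => h.2, fun h => ⟨trivial, h⟩⟩
  have e2 : gpart ℳ (⊥ : Submodule S M) n = ⊥ := by
    ext m; exact ⟨fun h => h.1, fun h => ⟨h, by rw [(Submodule.mem_bot _).1 h]; exact zero_mem _⟩⟩
  unfold glen
  beta_reduce
  rw [e1, e2, ← Module.length_compositionSeries s hs1 hs2]
  simp
end

section
/- Let A be a commutative Noetherian local ring which is a complete intersection: there exist a regular local ring S and a regular sequence x_1, …, x_c contained in the maximal ideal of S such that the completion of A with respect to its maximal ideal is isomorphic to S/(x_1, …, x_c). Let M and N be finitely generated A-modules. Then either Ext_A^n(M, N) = 0 for all n > dim A (the Krull dimension of A), or there exists a non-negative integer m_0 such that Ext_A^n(M, N) ≠ 0 for all even integers n ≥ m_0, or Ext_A^n(M, N) ≠ 0 for all odd integers n ≥ m_0. -/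
set_option linter.unusedSectionVars false
open CategoryTheory

/-- The `n`-th Ext group of two `A`-modules, as an object of `ModuleCat A`. -/
noncomputable abbrev extGroup (A : Type) [CommRing A] (M N : Type) [AddCommGroup M]
    [Module A M] [AddCommGroup N] [Module A N] (n : ℕ) : ModuleCat A :=
  ((_root_.Ext A (ModuleCat A) n).obj (Opposite.op (ModuleCat.of A M))).obj (ModuleCat.of A N)

section ExtBridge

variable {A : Type} [CommRing A] {M : Type} [AddCommGroup M] [Module A M]

/-- the chain complex attached to a sequence of linear maps -/
noncomputable def seqCx (P : ℕ → Type) [∀ n, AddCommGroup (P n)] [∀ n, Module A (P n)]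
    (d : ∀ n, P (n + 1) →ₗ[A] P n) (h : ∀ n, Function.Exact (d (n + 1)) (d n)) :
    ChainComplex (ModuleCat A) ℕ :=
  ChainComplex.of (fun n => ModuleCat.of A (P n)) (fun n => ModuleCat.ofHom (d n))
    (fun n => by
      ext y
      exact (h n).apply_apply_eq_zero y)

lemma seqCx_d (P : ℕ → Type) [∀ n, AddCommGroup (P n)] [∀ n, Module A (P n)]
    (d : ∀ n, P (n + 1) →ₗ[A] P n) (h : ∀ n, Function.Exact (d (n + 1)) (d n)) (n : ℕ) :
    (seqCx P d h).d (n + 1) n = ModuleCat.ofHom (d n) := by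
  exact ChainComplex.of_d (fun n => ModuleCat.of A (P n)) (fun n => ModuleCat.ofHom (d n)) _

lemma exists_projRes (P : ℕ → Type) [∀ n, AddCommGroup (P n)] [∀ n, Module A (P n)]
    (d : ∀ n, P (n + 1) →ₗ[A] P n) (h : ∀ n, Function.Exact (d (n + 1)) (d n))
    (hP : ∀ n, Module.Projective A (P n)) (ε : P 0 →ₗ[A] M) (hε : Function.Surjective ε)
    (h0 : Function.Exact (d 0) ε) :
    ∃ R : ProjectiveResolution (ModuleCat.of A M), R.complex = seqCx P d h := by
  have hz : (seqCx P d h).d 1 0 ≫ (ModuleCat.ofHom ε : ModuleCat.of A (P 0) ⟶ _) = 0 := by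
    rw [seqCx_d]
    ext y
    exact h0.apply_apply_eq_zero y
  refine ⟨{
    complex := seqCx P d h
    projective := fun n => ?_
    π := (ChainComplex.toSingle₀Equiv _ _).symm ⟨ModuleCat.ofHom ε, hz⟩
    quasiIso := ⟨fun n => ?_⟩ }, rfl⟩
  · have := hP n
    exact (IsProjective.iff_projective (P n)).1 this
  · cases n with
    | zero =>
      rw [ChainComplex.quasiIsoAt₀_iff, ShortComplex.quasiIso_iff_of_zeros']
      · have hex : (ShortComplex.mk ((seqCx P d h).d 1 0)
            (ModuleCat.ofHom ε : ModuleCat.of A (P 0) ⟶ _) hz).Exact := by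
          rw [ShortComplex.ShortExact.moduleCat_exact_iff_function_exact]
          simp only [seqCx_d]
          exact h0
        have hep : Epi (ModuleCat.ofHom ε) := (ModuleCat.epi_iff_surjective _).2 hε
        refine (ShortComplex.exact_and_epi_g_iff_of_iso ?_).2 ⟨hex, hep⟩
        exact ShortComplex.isoMk (Iso.refl _) (Iso.refl _) (Iso.refl _)
          ((Category.id_comp _).trans (Category.comp_id _).symm)
          (by
            refine (Category.id_comp _).trans (Eq.trans ?_ (Category.comp_id _).symm)
            exact (ChainComplex.toSingle₀Equiv_symm_apply_f_zero _ hz).symm)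
      all_goals rfl
    | succ n =>
      rw [quasiIsoAt_iff_exactAt']
      · rw [HomologicalComplex.exactAt_iff' _ (n + 1 + 1) (n + 1) n (by simp) (by simp)]
        rw [ShortComplex.ShortExact.moduleCat_exact_iff_function_exact]
        simp only [HomologicalComplex.sc', HomologicalComplex.shortComplexFunctor', seqCx_d]
        exact h n
      · apply ChainComplex.exactAt_succ_single_obj

/-- exactness of the Hom complex in degree `n+1` -/
def HomEx {A : Type} [CommRing A] (N : Type) [AddCommGroup N] [Module A N]
    (P : ℕ → Type) [∀ n, AddCommGroup (P n)] [∀ n, Module A (P n)]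
    (d : ∀ n, P (n + 1) →ₗ[A] P n) (n : ℕ) : Prop :=
  ∀ φ : P (n + 1) →ₗ[A] N, φ ∘ₗ d (n + 1) = 0 → ∃ ψ : P n →ₗ[A] N, ψ ∘ₗ d n = φ

lemma ext_iff_homEx (P : ℕ → Type) [∀ n, AddCommGroup (P n)] [∀ n, Module A (P n)]
    (d : ∀ n, P (n + 1) →ₗ[A] P n) (h : ∀ n, Function.Exact (d (n + 1)) (d n))
    (hP : ∀ n, Module.Projective A (P n)) (ε : P 0 →ₗ[A] M) (hε : Function.Surjective ε)
    (h0 : Function.Exact (d 0) ε) (N : Type) [AddCommGroup N] [Module A N] (n : ℕ) :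
    Subsingleton (extGroup A M N (n + 1)) ↔ HomEx N P d n := by
  obtain ⟨R, hR⟩ := exists_projRes P d h hP ε hε h0
  rw [← ModuleCat.isZero_iff_subsingleton, (R.isoExt (n + 1) (ModuleCat.of A N)).isZero_iff,
    ← HomologicalComplex.exactAt_iff_isZero_homology, hR,
    HomologicalComplex.exactAt_iff' _ n (n + 1) (n + 1 + 1) (by simp) (by simp),
    ShortComplex.ShortExact.moduleCat_exact_iff_function_exact]
  constructor
  · intro H φ hφ
    obtain ⟨ψ, hψ⟩ := (H (ModuleCat.ofHom φ)).1 (by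
      change (seqCx P d h).d (n + 1 + 1) (n + 1) ≫ ModuleCat.ofHom φ = 0
      rw [seqCx_d]
      ext y
      exact LinearMap.congr_fun hφ y)
    refine ⟨ModuleCat.Hom.hom ψ, ?_⟩
    change (seqCx P d h).d (n + 1) n ≫ ψ = _ at hψ
    rw [seqCx_d] at hψ
    exact congrArg ModuleCat.Hom.hom hψ
  · intro H φ
    constructor
    · intro hφ
      change (seqCx P d h).d (n + 1 + 1) (n + 1) ≫ φ = 0 at hφ
      rw [seqCx_d] at hφ
      obtain ⟨ψ, hψ⟩ := H (ModuleCat.Hom.hom φ) (congrArg ModuleCat.Hom.hom hφ)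
      refine ⟨ModuleCat.ofHom ψ, ?_⟩
      change (seqCx P d h).d (n + 1) n ≫ _ = _
      rw [seqCx_d]
      exact ModuleCat.hom_ext hψ
    · rintro ⟨ψ, rfl⟩
      change (seqCx P d h).d (n + 1 + 1) (n + 1) ≫ (seqCx P d h).d (n + 1) n ≫ ψ = 0
      erw [← Category.assoc, HomologicalComplex.d_comp_d, Limits.zero_comp]

lemma homEx_of_pd (P : ℕ → Type) [∀ n, AddCommGroup (P n)] [∀ n, Module A (P n)]
    (d : ∀ n, P (n + 1) →ₗ[A] P n) (h : ∀ n, Function.Exact (d (n + 1)) (d n))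
    (hP : ∀ n, Module.Projective A (P n)) (ε : P 0 →ₗ[A] M) (hε : Function.Surjective ε)
    (h0 : Function.Exact (d 0) ε) (N : Type) [AddCommGroup N] [Module A N] (n m : ℕ)
    (hpd : HasProjectiveDimensionLT (ModuleCat.of A M) m) (hm : m ≤ n + 1) :
    HomEx N P d n := by
  obtain ⟨R, hR⟩ := exists_projRes P d h hP ε hε h0
  have key : ∀ φ : R.complex.X (n + 1) ⟶ ModuleCat.of A N,
      R.complex.d (n + 1 + 1) (n + 1) ≫ φ = 0 → ∃ ψ, R.complex.d (n + 1) n ≫ ψ = φ := by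
    intro φ hφ
    rw [← R.extMk_eq_zero_iff φ (n + 1 + 1) rfl hφ n rfl]
    exact Abelian.Ext.eq_zero_of_hasProjectiveDimensionLT _ m hm
  rw [hR] at key
  intro φ hφ
  obtain ⟨ψ, hψ⟩ := key (ModuleCat.ofHom φ) (by
      rw [seqCx_d]
      ext y
      exact LinearMap.congr_fun hφ y)
  refine ⟨ModuleCat.Hom.hom ψ, ?_⟩
  rw [seqCx_d] at hψ
  exact congrArg ModuleCat.Hom.hom hψ

end ExtBridge

section RegularPd

lemma pd_free_quot {S : Type} [CommRing S] (x : S) (hx : ∀ y, x * y = 0 → y = 0) (n : ℕ) :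
    HasProjectiveDimensionLT (ModuleCat.of S (Fin n → S ⧸ Ideal.span {x})) 2 := by
  let f : (Fin n → S) →ₗ[S] (Fin n → S) := LinearMap.lsmul S _ x
  let g : (Fin n → S) →ₗ[S] (Fin n → S ⧸ Ideal.span {x}) :=
    LinearMap.compLeft (Submodule.mkQ (Ideal.span {x})) (Fin n)
  have hfg : g ∘ₗ f = 0 := by
    ext i j
    simp only [f, g, LinearMap.comp_apply, LinearMap.compLeft_apply, LinearMap.lsmul_apply,
      LinearMap.zero_apply, Pi.zero_apply, Function.comp, Pi.smul_apply, smul_eq_mul,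
      Submodule.mkQ_apply, LinearMap.single_apply]
    exact (Submodule.Quotient.mk_eq_zero _).2 (Ideal.mul_mem_right _ _ (Ideal.mem_span_singleton_self x))
  let sc : ShortComplex (ModuleCat S) := ShortComplex.mk (ModuleCat.ofHom f) (ModuleCat.ofHom g)
    (by rw [← ModuleCat.ofHom_comp, hfg]; rfl)
  have hsc : sc.ShortExact := by
    refine { exact := ?_, mono_f := ?_, epi_g := ?_ }
    · rw [ShortComplex.ShortExact.moduleCat_exact_iff_function_exact]
      intro v
      constructor
      · intro hv
        have : ∀ i, ∃ w, v i = x * w := by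
          intro i
          have h1 : (Submodule.Quotient.mk (v i) : S ⧸ Ideal.span {x}) = 0 := congrFun hv i
          rw [Submodule.Quotient.mk_eq_zero] at h1
          exact Ideal.mem_span_singleton.1 h1
        choose w hw using this
        exact ⟨w, funext fun i => (hw i).symm⟩
      · rintro ⟨w, rfl⟩
        exact LinearMap.congr_fun hfg w
    · rw [ModuleCat.mono_iff_injective]
      rw [injective_iff_map_eq_zero]
      intro v hv
      funext i
      exact hx _ (congrFun hv i)
    · rw [ModuleCat.epi_iff_surjective]
      intro v
      choose w hw using fun i => Submodule.mkQ_surjective _ (v i)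
      exact ⟨w, funext hw⟩
  have p1 : Projective (ModuleCat.of S (Fin n → S)) :=
    (IsProjective.iff_projective (Fin n → S)).1 inferInstance
  have p2 : HasProjectiveDimensionLT (ModuleCat.of S (Fin n → S)) 1 := inferInstance
  have p3 : HasProjectiveDimensionLT (ModuleCat.of S (Fin n → S)) 2 := inferInstance
  exact hsc.hasProjectiveDimensionLT_X₃ 1 p2 p3

/-- the kernel short exact sequence -/
lemma ker_shortExact {S : Type} [CommRing S] {P X : Type} [AddCommGroup P] [Module S P]
    [AddCommGroup X] [Module S X] (f : P →ₗ[S] X) (hf : Function.Surjective f) :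
    (ShortComplex.mk (ModuleCat.ofHom (LinearMap.ker f).subtype) (ModuleCat.ofHom f)
      (by ext y; exact y.2) : ShortComplex (ModuleCat S)).ShortExact := by
  refine { exact := ?_, mono_f := ?_, epi_g := ?_ }
  · rw [ShortComplex.ShortExact.moduleCat_exact_iff_function_exact]
    intro v
    exact ⟨fun hv => ⟨⟨v, hv⟩, rfl⟩, by rintro ⟨w, rfl⟩; exact w.2⟩
  · rw [ModuleCat.mono_iff_injective]
    exact Subtype.val_injective
  · rw [ModuleCat.epi_iff_surjective]
    exact hf

lemma pd_change {S : Type} [CommRing S] [IsNoetherianRing S] (x : S) (hx : ∀ y, x * y = 0 → y = 0)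
    (m : ℕ) : ∀ (X : Type) [AddCommGroup X] [Module S X] [Module (S ⧸ Ideal.span {x}) X]
      [IsScalarTower S (S ⧸ Ideal.span {x}) X] [Module.Finite (S ⧸ Ideal.span {x}) X],
      HasProjectiveDimensionLT (ModuleCat.of (S ⧸ Ideal.span {x}) X) m →
      HasProjectiveDimensionLT (ModuleCat.of S X) (m + 1) := by
  induction m with
  | zero =>
    intro X _ _ _ _ _ h
    have := isZero_of_hasProjectiveDimensionLT_zero (ModuleCat.of (S ⧸ Ideal.span {x}) X)
    rw [ModuleCat.isZero_iff_subsingleton] at this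
    have h2 : Subsingleton (ModuleCat.of S X) := this
    have h3 := (ModuleCat.isZero_iff_subsingleton (M := ModuleCat.of S X)).2 h2
    have := h3.hasProjectiveDimensionLT_zero
    exact hasProjectiveDimensionLT_of_ge _ 0 1 (by simp)
  | succ m ih =>
    intro X _ _ _ _ _ h
    obtain ⟨n, f, hf⟩ := Module.Finite.exists_fin' (S ⧸ Ideal.span {x}) X
    have hfree := pd_free_quot x hx n
    have hse := ker_shortExact f hf
    have hse' := ker_shortExact (f.restrictScalars S) hf
    cases m with
    | zero =>
      have hp : Module.Projective (S ⧸ Ideal.span {x}) X :=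
        (IsProjective.iff_projective X).2 (projective_iff_hasProjectiveDimensionLT_one.2 h)
      obtain ⟨g, hg⟩ := Module.projective_lifting_property f LinearMap.id hf
      let r : Retract (ModuleCat.of S X) (ModuleCat.of S (Fin n → S ⧸ Ideal.span {x})) :=
        { i := ModuleCat.ofHom (g.restrictScalars S)
          r := ModuleCat.ofHom (f.restrictScalars S)
          retract := by
            ext y
            exact LinearMap.congr_fun hg y }
      exact r.hasProjectiveDimensionLT 2
    | succ m =>
      have p1 : Projective (ModuleCat.of (S ⧸ Ideal.span {x}) (Fin n → S ⧸ Ideal.span {x})) :=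
        (IsProjective.iff_projective (Fin n → S ⧸ Ideal.span {x})).1 inferInstance
      have hk := (hse.hasProjectiveDimensionLT_X₃_iff m p1).1 h
      have hk' := ih (LinearMap.ker f) hk
      refine hse'.hasProjectiveDimensionLT_X₃ (m + 2) hk' ?_
      exact hasProjectiveDimensionLT_of_ge _ 2 (m + 2 + 1) (by omega)

end RegularPd

section RegularInd
open IsLocalRing

lemma exists_prime_dim {S : Type} [CommRing S] (d : ℕ) (h : (d : WithBot ℕ∞) ≤ ringKrullDim S) :
    ∃ q : Ideal S, q.IsPrime ∧ (d : WithBot ℕ∞) ≤ ringKrullDim (S ⧸ q) := by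
  obtain ⟨l, hl⟩ := Order.le_krullDim_iff.1 h
  refine ⟨l.head.asIdeal, l.head.2, ?_⟩
  rw [ringKrullDim_quotient]
  rw [Order.le_krullDim_iff]
  refine ⟨⟨l.length, fun i => ⟨l i, ?_⟩, fun i => l.step i⟩, hl⟩
  rw [PrimeSpectrum.mem_zeroLocus]
  exact LTSeries.head_le l i

lemma reg_dim_quot {S : Type} [CommRing S] [IsNoetherianRing S] [IsLocalRing S] (x : S)
    (hx : x ∈ maximalIdeal S) : ringKrullDim S ≤ ringKrullDim (S ⧸ Ideal.span {x}) + 1 := by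
  have := ringKrullDim_le_ringKrullDim_quotient_add_card ({x} : Finset S)
    (by rw [ringJacobson_eq_maximalIdeal]; simpa using hx)
  rw [Finset.coe_singleton, Finset.card_singleton] at this
  exact_mod_cast this

lemma wb_cancel {a b : WithBot ℕ∞} (h : a + 1 ≤ b + 1) : a ≤ b := by
  have : (WithBot.some 1 : WithBot ℕ∞) ≠ ⊥ := WithBot.coe_ne_bot
  induction a with
  | bot => exact bot_le
  | coe a =>
    induction b with
    | bot => exact absurd h (by simp)
    | coe b =>
      have h' : (a + 1 : ℕ∞) ≤ b + 1 := by exact_mod_cast h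
      exact_mod_cast (ENat.add_le_add_iff_right ENat.one_ne_top).1 h'

theorem reg_induct (d : ℕ) : ∀ (S : Type) [CommRing S] [IsNoetherianRing S] [IsLocalRing S],
    (d : WithBot ℕ∞) ≤ ringKrullDim S →
    ∀ (g : Fin d → S), maximalIdeal S = Ideal.span (Set.range g) →
    IsDomain S ∧ ∀ (M : Type) [AddCommGroup M] [Module S M] [Module.Finite S M],
      HasProjectiveDimensionLT (ModuleCat.of S M) (d + 1) := by
  induction d with
  | zero =>
    intro S _ _ _ hd g hg
    have h0 : maximalIdeal S = ⊥ := by rw [hg]; simp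
    have hf : IsField S := isField_iff_maximalIdeal_eq.2 h0
    refine ⟨hf.isDomain, ?_⟩
    intro M _ _ _
    let := hf.toField
    have : Module.Projective S M := Module.Projective.of_basis (Module.Basis.ofVectorSpace S M)
    have p1 : Projective (ModuleCat.of S M) :=
      (IsProjective.iff_projective M).1 this
    exact projective_iff_hasProjectiveDimensionLT_one.1 p1
  | succ d ih =>
    intro S _ _ _ hd g hg
    obtain ⟨q, hq, hqd⟩ := exists_prime_dim _ hd
    have hgm : ∀ i, g i ∈ maximalIdeal S := fun i => by
      rw [hg]; exact Ideal.subset_span ⟨i, rfl⟩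
    obtain ⟨i, hi⟩ : ∃ i, g i ∉ q := by
      by_contra hcon
      push Not at hcon
      have h1 : maximalIdeal S ≤ q := by
        rw [hg, Ideal.span_le]; rintro _ ⟨i, rfl⟩; exact hcon i
      have h2 : q = maximalIdeal S := ((maximalIdeal.isMaximal S).eq_of_le hq.ne_top h1).symm
      subst h2
      have : ringKrullDim (S ⧸ maximalIdeal S) = 0 := by
        let := Ideal.Quotient.field (maximalIdeal S)
        exact ringKrullDim_eq_zero_of_field _
      rw [this] at hqd
      norm_cast at hqd
    set x := g i with hxdef
    have hxm := hgm i
    rw [← hxdef] at hxm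
    have hI : Ideal.span {x} ≠ ⊤ := by
      rw [Ne, Ideal.span_singleton_eq_top]; exact hxm
    have : Nontrivial (S ⧸ Ideal.span {x}) := Ideal.Quotient.nontrivial_iff.2 hI
    have : IsLocalRing (S ⧸ Ideal.span {x}) :=
      IsLocalRing.of_surjective' (Ideal.Quotient.mk _) Ideal.Quotient.mk_surjective
    have hdx : (d : WithBot ℕ∞) ≤ ringKrullDim (S ⧸ Ideal.span {x}) := by
      have h1 := hd.trans (reg_dim_quot x hxm)
      push_cast at h1
      exact wb_cancel h1
    have hmx : maximalIdeal (S ⧸ Ideal.span {x}) =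
        Ideal.span (Set.range (fun j : Fin d => Ideal.Quotient.mk (Ideal.span {x}) (g (i.succAbove j)))) := by
      have h1 : maximalIdeal (S ⧸ Ideal.span {x}) =
          (maximalIdeal S).map (Ideal.Quotient.mk (Ideal.span {x})) := by
        refine le_antisymm ?_ ?_
        · intro y hy
          obtain ⟨y, rfl⟩ := Ideal.Quotient.mk_surjective y
          refine Ideal.mem_map_of_mem _ ?_
          rw [mem_maximalIdeal, mem_nonunits_iff] at hy ⊢
          exact fun h => hy (h.map _)
        · rw [Ideal.map_le_iff_le_comap]
          exact ((local_hom_TFAE (Ideal.Quotient.mk (Ideal.span {x}))).out 0 3).1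
            (Function.Surjective.isLocalHom _ Ideal.Quotient.mk_surjective)
      rw [h1, hg, Ideal.map_span]
      refine le_antisymm ?_ (Ideal.span_mono ?_)
      · rw [Ideal.span_le]
        rintro _ ⟨_, ⟨j, rfl⟩, rfl⟩
        by_cases hj : j = i
        · subst hj
          have : Ideal.Quotient.mk (Ideal.span {x}) (g j) = 0 :=
            Ideal.Quotient.eq_zero_iff_mem.2 (Ideal.mem_span_singleton_self x)
          rw [this]; exact zero_mem _
        · obtain ⟨k, rfl⟩ := Fin.exists_succAbove_eq hj
          exact Ideal.subset_span ⟨k, rfl⟩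
      · rintro _ ⟨j, rfl⟩
        exact ⟨_, ⟨_, rfl⟩, rfl⟩
    obtain ⟨hdom, hpd⟩ := ih (S ⧸ Ideal.span {x}) hdx _ hmx
    have hdx' : ringKrullDim (S ⧸ Ideal.span {x}) ≤ d := by
      refine (ringKrullDim_le_spanFinrank_maximalIdeal _).trans ?_
      rw [hmx]
      have := Submodule.spanFinrank_span_le_ncard_of_finite (R := S ⧸ Ideal.span {x})
        (Set.finite_range (fun j : Fin d => Ideal.Quotient.mk (Ideal.span {x}) (g (i.succAbove j))))
      have h2 : (Set.range (fun j : Fin d => Ideal.Quotient.mk (Ideal.span {x}) (g (i.succAbove j)))).ncard ≤ d := by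
        rw [← Set.image_univ]
        refine (Set.ncard_image_le Set.finite_univ).trans ?_
        simp
      exact_mod_cast this.trans h2
    have hqx : q ≤ Ideal.span {x} := by
      intro y hy
      by_contra hyx
      have hy0 : Ideal.Quotient.mk (Ideal.span {x}) y ≠ 0 := by
        rwa [Ne, Ideal.Quotient.eq_zero_iff_mem]
      have h1 := ringKrullDim_quotient_succ_le_of_nonZeroDivisor
        (mem_nonZeroDivisors_of_ne_zero hy0)
      have : Nontrivial (S ⧸ q) := Ideal.Quotient.nontrivial_iff.2 hq.ne_top
      have : IsLocalRing (S ⧸ q) :=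
        IsLocalRing.of_surjective' (Ideal.Quotient.mk _) Ideal.Quotient.mk_surjective
      have hxq : Ideal.Quotient.mk q x ∈ maximalIdeal (S ⧸ q) := by
        have : IsLocalHom (Ideal.Quotient.mk q) := Function.Surjective.isLocalHom _ Ideal.Quotient.mk_surjective
        exact (((local_hom_TFAE (Ideal.Quotient.mk q)).out 0 3 rfl rfl).1 this) hxm
      have h2 := reg_dim_quot (Ideal.Quotient.mk q x) hxq
      let f1 : S →+* (S ⧸ q) ⧸ Ideal.span {Ideal.Quotient.mk q x} :=
        (Ideal.Quotient.mk _).comp (Ideal.Quotient.mk q)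
      let f2 : S ⧸ Ideal.span {x} →+* (S ⧸ q) ⧸ Ideal.span {Ideal.Quotient.mk q x} :=
        Ideal.Quotient.lift _ f1 (by
          intro a ha
          obtain ⟨b, rfl⟩ := Ideal.mem_span_singleton.1 ha
          rw [map_mul]
          have : f1 x = 0 := Ideal.Quotient.eq_zero_iff_mem.2 (Ideal.mem_span_singleton_self _)
          rw [this, zero_mul])
      let f3 : (S ⧸ Ideal.span {x}) ⧸ Ideal.span {Ideal.Quotient.mk (Ideal.span {x}) y} →+*
          (S ⧸ q) ⧸ Ideal.span {Ideal.Quotient.mk q x} :=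
        Ideal.Quotient.lift _ f2 (by
          intro a ha
          obtain ⟨b, rfl⟩ := Ideal.mem_span_singleton.1 ha
          rw [map_mul]
          have : f2 (Ideal.Quotient.mk (Ideal.span {x}) y) = 0 := by
            change (Ideal.Quotient.mk _) (Ideal.Quotient.mk q y) = 0
            rw [Ideal.Quotient.eq_zero_iff_mem.2 hy, map_zero]
          rw [this, zero_mul])
      have h3 := ringKrullDim_le_of_surjective f3 (by
        intro z
        obtain ⟨z, rfl⟩ := Ideal.Quotient.mk_surjective z
        obtain ⟨z, rfl⟩ := Ideal.Quotient.mk_surjective z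
        exact ⟨Ideal.Quotient.mk _ (Ideal.Quotient.mk _ z), rfl⟩)
      have h4 : ((d : WithBot ℕ∞) + 1) ≤ d := by
        calc ((d : WithBot ℕ∞) + 1) ≤ _ := by exact_mod_cast hqd.trans h2
          _ ≤ _ := by gcongr
          _ ≤ _ := h1
          _ ≤ _ := hdx'
      norm_cast at h4
      omega
    have hq0 : q = ⊥ := by
      refine Submodule.eq_bot_of_le_smul_of_le_jacobson_bot (maximalIdeal S) q
        (IsNoetherian.noetherian q) ?_ (maximalIdeal_le_jacobson _)
      intro y hy
      obtain ⟨b, rfl⟩ := Ideal.mem_span_singleton.1 (hqx hy)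
      have hb : b ∈ q := (hq.mem_or_mem hy).resolve_left hi
      exact Submodule.smul_mem_smul hxm hb
    have hdomS : IsDomain S := by
      subst hq0
      exact IsDomain.of_bot_isPrime S
    have hx0 : x ≠ 0 := fun h => hi (by rw [h]; exact zero_mem _)
    refine ⟨hdomS, ?_⟩
    intro M _ _ _
    obtain ⟨n, f, hf⟩ := Module.Finite.exists_fin' S M
    have hse := ker_shortExact f hf
    have hreg : IsSMulRegular (LinearMap.ker f) x := by
      intro y z hyz
      have h1 : x • (y - z) = 0 := by rw [smul_sub]; exact sub_eq_zero.2 hyz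
      exact sub_eq_zero.1 ((smul_eq_zero.1 h1).resolve_left hx0)
    have htors : Module.IsTorsionBySet S (QuotSMulTop x (LinearMap.ker f)) (Ideal.span {x} : Ideal S) := by
      intro y a
      obtain ⟨a, ha⟩ := a
      obtain ⟨b, rfl⟩ := Ideal.mem_span_singleton.1 ha
      obtain ⟨y, rfl⟩ := Submodule.mkQ_surjective _ y
      change (x * b) • _ = _
      rw [← map_smul, Submodule.mkQ_apply, Submodule.Quotient.mk_eq_zero, mul_smul]
      exact Submodule.smul_mem_pointwise_smul _ _ _ trivial
    let := htors.module
    have : IsScalarTower S (S ⧸ Ideal.span {x}) (QuotSMulTop x (LinearMap.ker f)) :=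
      htors.isScalarTower
    have : Module.Finite (S ⧸ Ideal.span {x}) (QuotSMulTop x (LinearMap.ker f)) :=
      Module.Finite.of_restrictScalars_finite S _ _
    have hk1 := pd_change x (fun y hy => (mul_eq_zero.1 hy).resolve_left hx0) _ _
      (hpd (QuotSMulTop x (LinearMap.ker f)))
    have hk2 := ModuleCat.projectiveDimension_quotSMulTop_eq_succ_of_isSMulRegular
      (ModuleCat.of S (LinearMap.ker f)) x hreg hxm
    have hk3 : projectiveDimension (ModuleCat.of S (QuotSMulTop x (LinearMap.ker f))) ≤
        ((d + 1 : ℕ) : WithBot ℕ∞) := (projectiveDimension_le_iff _ _).2 hk1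
    have hk4 := hk2 ▸ hk3
    have hk5 : projectiveDimension (ModuleCat.of S (LinearMap.ker f)) ≤ ((d : ℕ) : WithBot ℕ∞) := by
      push_cast at hk4
      exact wb_cancel hk4
    have hk : HasProjectiveDimensionLT (ModuleCat.of S (LinearMap.ker f)) (d + 1) :=
      (projectiveDimension_le_iff _ _).1 hk5
    refine hse.hasProjectiveDimensionLT_X₃ (d + 1) hk ?_
    have p1 : Projective (ModuleCat.of S (Fin n → S)) :=
      (IsProjective.iff_projective (Fin n → S)).1 inferInstance
    have p2 : HasProjectiveDimensionLT (ModuleCat.of S (Fin n → S)) 1 := inferInstance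
    exact hasProjectiveDimensionLT_of_ge _ 1 _ (by omega)

end RegularInd

section DG

/-- A (nonnegatively) graded complex of `S`-modules with anticommuting homotopies `e i` for
multiplication by `x i`, `i ∈ I`. -/
structure DGm {S : Type} [CommRing S] (x : ℕ → S) (I : Set ℕ) (X : Type) [AddCommGroup X]
    [Module S X] where
  p : ℤ → X →ₗ[S] X
  d : X →ₗ[S] X
  e : ℕ → X →ₗ[S] X
  pp : ∀ n y, p n (p n y) = p n y
  pq : ∀ n m y, n ≠ m → p n (p m y) = 0
  pneg : ∀ n y, n < 0 → p n y = 0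
  fin : ∀ y, ∃ L : ℕ, ∀ n : ℤ, (L : ℤ) ≤ n → p n y = 0
  tot : ∀ y, (∀ n, p n y = 0) → y = 0
  dd : ∀ y, d (d y) = 0
  pd : ∀ n y, p n (d y) = d (p (n + 1) y)
  pe : ∀ i ∈ I, ∀ n y, p n (e i y) = e i (p (n - 1) y)
  ee : ∀ i ∈ I, ∀ y, e i (e i y) = 0
  eeq : ∀ i ∈ I, ∀ j ∈ I, i ≠ j → ∀ y, e i (e j y) = - e j (e i y)
  de : ∀ i ∈ I, ∀ y, d (e i y) = x i • y - e i (d y)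

variable {S : Type} [CommRing S] {x : ℕ → S} {I : Set ℕ}
variable {X : Type} [AddCommGroup X] [Module S X] {Y : Type} [AddCommGroup Y] [Module S Y]

lemma DGm.ppq (D : DGm x I X) (n m : ℤ) (y : X) : D.p n (D.p m y) = if n = m then D.p m y else 0 := by
  split_ifs with h
  · subst h; exact D.pp _ _
  · exact D.pq _ _ _ h

/-- decomposition into homogeneous components -/
lemma DGm.sum_eq (D : DGm x I X) (y : X) (L : ℕ) (hL : ∀ n : ℤ, (L : ℤ) ≤ n → D.p n y = 0) :
    ∑ k ∈ Finset.range L, D.p (k : ℤ) y = y := by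
  rw [← sub_eq_zero]
  apply D.tot
  intro n
  rw [map_sub, map_sum, sub_eq_zero]
  simp_rw [D.ppq]
  by_cases hn : 0 ≤ n
  · obtain ⟨n, rfl⟩ := Int.eq_ofNat_of_zero_le hn
    by_cases h : n < L
    · rw [Finset.sum_eq_single n]
      · simp
      · intro b _ hb
        rw [if_neg]
        intro h'
        exact hb (by exact_mod_cast h'.symm)
      · intro h'; simp at h'; omega
    · rw [hL n (by simpa using h)]
      refine Finset.sum_eq_zero fun k hk => ?_
      rw [if_neg]
      intro h'
      have : n = k := by exact_mod_cast h'
      rw [Finset.mem_range] at hk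
      omega
  · rw [D.pneg n y (by omega)]
    refine Finset.sum_eq_zero fun k hk => ?_
    rw [if_neg]
    intro h'
    omega

lemma DGm.unif [Module.Finite S X] (D : DGm x I X) :
    ∃ L : ℕ, ∀ y, ∀ n : ℤ, (L : ℤ) ≤ n → D.p n y = 0 := by
  obtain ⟨s, hs⟩ := Module.Finite.fg_top (R := S) (M := X)
  choose L hL using D.fin
  refine ⟨s.sup L, fun y n hn => ?_⟩
  have : (⊤ : Submodule S X) ≤ LinearMap.ker (D.p n) := by
    rw [← hs, Submodule.span_le]
    intro z hz
    refine hL z n ?_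
    have := Finset.le_sup (f := L) hz
    omega
  exact this (Submodule.mem_top : y ∈ ⊤)

/-- compatibility of a map with the structures -/
structure DGc (D : DGm x I X) (E : DGm x I Y) (J : Set ℕ) (f : X →ₗ[S] Y) : Prop where
  p : ∀ n y, f (D.p n y) = E.p n (f y)
  d : ∀ y, f (D.d y) = E.d (f y)
  e : ∀ i ∈ J, ∀ y, f (D.e i y) = E.e i (f y)

def DGm.mono (D : DGm x I X) {J : Set ℕ} (h : J ⊆ I) : DGm x J X where
  p := D.p
  d := D.d
  e := D.e
  pp := D.pp
  pq := D.pq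
  pneg := D.pneg
  fin := D.fin
  tot := D.tot
  dd := D.dd
  pd := D.pd
  pe i hi := D.pe i (h hi)
  ee i hi := D.ee i (h hi)
  eeq i hi j hj := D.eeq i (h hi) j (h hj)
  de i hi := D.de i (h hi)

/-- kernel; the homotopies outside `I` are replaced by zero -/
noncomputable def DGm.ker (D : DGm x I X) (E : DGm x I Y) (f : X →ₗ[S] Y) (h : DGc D E I f) :
    DGm x I (LinearMap.ker f) :=
  open Classical in
  { p := fun n => (D.p n).restrict (p := LinearMap.ker f) (q := LinearMap.ker f) (fun y hy => by
      rw [LinearMap.mem_ker] at hy ⊢; rw [h.p, hy, map_zero])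
    d := D.d.restrict (p := LinearMap.ker f) (q := LinearMap.ker f) (fun y hy => by
      rw [LinearMap.mem_ker] at hy ⊢; rw [h.d, hy, map_zero])
    e := fun i => if hi : i ∈ I then (D.e i).restrict (p := LinearMap.ker f) (q := LinearMap.ker f)
      (fun y hy => by
        rw [LinearMap.mem_ker] at hy ⊢; rw [h.e i hi, hy, map_zero]) else 0
    pp := fun n y => Subtype.ext (D.pp n y)
    pq := fun n m y hnm => Subtype.ext (D.pq n m y hnm)
    pneg := fun n y hn => Subtype.ext (D.pneg n y hn)
    fin := fun y => by
      obtain ⟨L, hL⟩ := D.fin y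
      exact ⟨L, fun n hn => Subtype.ext (hL n hn)⟩
    tot := fun y hy => Subtype.ext (D.tot y fun n => congrArg Subtype.val (hy n))
    dd := fun y => Subtype.ext (D.dd y)
    pd := fun n y => Subtype.ext (D.pd n y)
    pe := fun i hi n y => by
      simp only [dif_pos hi]; exact Subtype.ext (D.pe i hi n y)
    ee := fun i hi y => by
      simp only [dif_pos hi]; exact Subtype.ext (D.ee i hi y)
    eeq := fun i hi j hj hij y => by
      simp only [dif_pos hi, dif_pos hj]; exact Subtype.ext (D.eeq i hi j hj hij y)
    de := fun i hi y => by
      simp only [dif_pos hi]; exact Subtype.ext (D.de i hi y) }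

/-- projection on the `n`-th coordinate -/
def gr (S : Type) [CommRing S] (Y : Type) [AddCommGroup Y] [Module S Y] (m : ℕ) (n : ℤ) :
    (Fin m → Y) →ₗ[S] (Fin m → Y) where
  toFun v k := if ((k : ℕ) : ℤ) = n then v k else 0
  map_add' v w := by ext k; simp; split_ifs <;> simp
  map_smul' a v := by ext k; simp

lemma gr_apply (m : ℕ) (n : ℤ) (v : Fin m → Y) (k : Fin m) :
    gr S Y m n v k = if ((k : ℕ) : ℤ) = n then v k else 0 := rfl

/-- the free cover, without homotopies -/
noncomputable def DGm.base (x : ℕ → S) (Y : Type) [AddCommGroup Y] [Module S Y] (L : ℕ) :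
    DGm x ∅ ((Fin (L + 1) → Y) × (Fin L → Y)) where
  p n := LinearMap.prodMap (gr S Y (L + 1) n) (gr S Y L n)
  d := LinearMap.prod 0 (LinearMap.pi fun k => LinearMap.proj k.succ ∘ₗ LinearMap.fst S _ _)
  e _ := 0
  pp n y := by
    ext k <;> simp [gr_apply] <;> grind
  pq n m y h := by
    ext k <;> simp [gr_apply] <;> grind
  pneg n y h := by
    ext k <;> simp [gr_apply] <;> grind
  fin y := by
    refine ⟨L + 1, fun n hn => ?_⟩
    ext k <;> simp [gr_apply] <;> grind
  tot y h := by
    ext k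
    · have := congrFun (congrArg Prod.fst (h k)) k
      simpa [gr_apply] using this
    · have := congrFun (congrArg Prod.snd (h k)) k
      simpa [gr_apply] using this
  dd y := by
    ext k <;> simp
  pd n y := by
    ext k <;> simp [gr_apply]
  pe i hi := by simp at hi
  ee i hi := by simp at hi
  eeq i hi := by simp at hi
  de i hi := by simp at hi

/-- adjoining one homotopy -/
def DGm.adj (D : DGm x I X) (i : ℕ) (hi : i ∉ I) : DGm x (insert i I) (X × X) where
  p n := LinearMap.prodMap (D.p n) (D.p (n - 1))
  d := LinearMap.prod (D.d ∘ₗ LinearMap.fst S _ _ + x i • LinearMap.snd S _ _)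
    (- (D.d ∘ₗ LinearMap.snd S _ _))
  e j := if j = i then LinearMap.prod 0 (LinearMap.fst S _ _) else
    LinearMap.prodMap (D.e j) (- D.e j)
  pp n y := by ext <;> simp [D.pp]
  pq n m y h := by
    ext
    · simp [D.pq _ _ _ h]
    · simp [D.pq (n - 1) (m - 1) _ (by omega)]
  pneg n y h := by ext <;> simp [D.pneg _ _ h, D.pneg (n - 1) _ (by omega)]
  fin y := by
    obtain ⟨L, hL⟩ := D.fin y.1
    obtain ⟨L', hL'⟩ := D.fin y.2
    refine ⟨max L (L' + 1), fun n hn => ?_⟩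
    ext
    · simp; exact hL n (by omega)
    · simp; exact hL' (n - 1) (by omega)
  tot y h := by
    ext
    · exact D.tot _ fun n => congrArg Prod.fst (h n)
    · refine D.tot _ fun n => ?_
      have := congrArg Prod.snd (h (n + 1))
      simpa using this
  dd y := by ext <;> simp [D.dd]
  pd n y := by
    ext <;> simp [D.pd]
  pe j hj n y := by
    by_cases hji : j = i
    · simp [hji]
    · have hj' : j ∈ I := hj.resolve_left hji
      simp [hji, D.pe j hj']
  ee j hj y := by
    by_cases hji : j = i
    · simp [hji]
    · have hj' : j ∈ I := hj.resolve_left hji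
      simp [hji, D.ee j hj']
  eeq j hj k hk hjk y := by
    by_cases hji : j = i
    · have hki : k ≠ i := fun h => hjk (hji.trans h.symm)
      simp [hji, hki]
    · by_cases hki : k = i
      · simp [hji, hki]
      · have hj' : j ∈ I := hj.resolve_left hji
        have hk' : k ∈ I := hk.resolve_left hki
        simp [hji, hki, D.eeq j hj' k hk' hjk]
  de j hj y := by
    by_cases hji : j = i
    · subst hji
      ext <;> simp
    · have hj' : j ∈ I := hj.resolve_left hji
      ext
      · simp [hji, D.de j hj']
        abel
      · simp [hji, D.de j hj']

/-- existence of free covers -/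
lemma DGm.cover [Module.Finite S X] {c : ℕ} (D : DGm x {i | i < c} X) (k : ℕ) (hk : k ≤ c) :
    ∃ (P : Type) (_ : AddCommGroup P) (_ : Module S P) (_ : Module.Finite S P)
      (_ : Module.Projective S P) (E : DGm x {i | i < k} P) (f : P →ₗ[S] X),
      Function.Surjective f ∧
      DGc E (D.mono (fun _ h => lt_of_lt_of_le h hk)) {i | i < k} f := by
  induction k with
  | zero =>
    obtain ⟨L, hL⟩ := D.unif
    obtain ⟨r, π, hπ⟩ := Module.Finite.exists_fin' S X
    have hempty : {i : ℕ | i < 0} = ∅ := by ext; simp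
    refine ⟨(Fin (L + 1) → (Fin r → S)) × (Fin L → (Fin r → S)), inferInstance, inferInstance,
      inferInstance, inferInstance, (DGm.base x (Fin r → S) L).mono hempty.le,
      LinearMap.coprod (∑ k : Fin (L + 1), D.p (k : ℕ) ∘ₗ π ∘ₗ LinearMap.proj k)
        (∑ k : Fin L, D.d ∘ₗ D.p ((k : ℕ) + 1) ∘ₗ π ∘ₗ LinearMap.proj k), ?_, ?_⟩
    · intro y
      obtain ⟨v, rfl⟩ := hπ y
      refine ⟨(fun _ => v, 0), ?_⟩
      have := D.sum_eq (π v) (L + 1) (fun n hn => hL _ n (by push_cast at hn; omega))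
      rw [Finset.sum_range] at this
      simpa using this
    · refine ⟨fun n y => ?_, fun y => ?_, fun i hi => by simp at hi⟩
      · simp only [DGm.mono, DGm.base, LinearMap.prodMap_apply, LinearMap.coprod_apply,
          LinearMap.sum_apply, LinearMap.comp_apply, LinearMap.proj_apply, gr_apply, map_add,
          map_sum, D.pd, D.ppq]
        congr 1
        · refine Finset.sum_congr rfl fun k _ => ?_
          by_cases h : ((k : ℕ) : ℤ) = n
          · simp [h]
          · simp [h, Ne.symm h]
        · refine Finset.sum_congr rfl fun k _ => ?_
          by_cases h : ((k : ℕ) : ℤ) = n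
          · simp [h]
          · simp [h, Ne.symm h]
      · simp only [DGm.mono, DGm.base, LinearMap.prod_apply, LinearMap.coprod_apply, Function.prod,
          LinearMap.sum_apply, LinearMap.comp_apply, LinearMap.proj_apply, map_add, LinearMap.pi_apply,
          map_sum, D.dd, LinearMap.zero_apply, LinearMap.fst_apply, Pi.zero_apply, map_zero]
        rw [Fin.sum_univ_succ]
        have h0 : ∀ z, D.d (D.p 0 z) = 0 := fun z => by
          have := D.pd (-1) z
          rw [D.pneg _ _ (by norm_num)] at this
          exact this.symm
        simp [h0]
  | succ k ih =>
    obtain ⟨P, _, _, _, _, E, f, hf, hc⟩ := ih (by omega)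
    have hkc : k ∈ {i | i < c} := hk
    have hins : {i | i < k + 1} = insert k {i | i < k} := by ext; simp; omega
    refine ⟨P × P, inferInstance, inferInstance, inferInstance, inferInstance,
      (E.adj k (by simp)).mono hins.le, LinearMap.coprod f (D.e k ∘ₗ f), ?_, ?_⟩
    · intro y
      obtain ⟨v, rfl⟩ := hf y
      exact ⟨(v, 0), by simp⟩
    · have hp := hc.p
      have hd := hc.d
      have he := hc.e
      simp only [DGm.mono] at hp hd he
      refine ⟨fun n y => ?_, fun y => ?_, fun i hi y => ?_⟩
      · simp [DGm.mono, DGm.adj, hp, D.pe k hkc]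
      · simp [DGm.mono, DGm.adj, hd, D.de k hkc]
        abel
      · by_cases hik : i = k
        · simp [DGm.mono, DGm.adj, hik, D.ee k hkc]
        · have hi' : i < k := by simp at hi; omega
          have hic : i < c := by omega
          simp [DGm.mono, DGm.adj, hik, he i hi', D.eeq i hic k hkc hik]

/-- the cone used in the inductive construction of resolutions -/
def DGm.cone (D : DGm x I X) (E : DGm x I Y) (g : Y →ₗ[S] X) (h : DGc E D I g) :
    DGm x I (X × Y) where
  p n := LinearMap.prodMap (D.p n) (E.p (n - 1))
  d := LinearMap.prod (D.d ∘ₗ LinearMap.fst S _ _ + g ∘ₗ LinearMap.snd S _ _)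
    (- (E.d ∘ₗ LinearMap.snd S _ _))
  e j := LinearMap.prodMap (D.e j) (- E.e j)
  pp n y := by ext <;> simp [D.pp, E.pp]
  pq n m y h := by
    ext
    · simp [D.pq _ _ _ h]
    · simp [E.pq (n - 1) (m - 1) _ (by omega)]
  pneg n y h := by ext <;> simp [D.pneg _ _ h, E.pneg (n - 1) _ (by omega)]
  fin y := by
    obtain ⟨L, hL⟩ := D.fin y.1
    obtain ⟨L', hL'⟩ := E.fin y.2
    refine ⟨max L (L' + 1), fun n hn => ?_⟩
    ext
    · simp; exact hL n (by omega)
    · simp; exact hL' (n - 1) (by omega)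
  tot y h := by
    ext
    · exact D.tot _ fun n => congrArg Prod.fst (h n)
    · refine E.tot _ fun n => ?_
      have := congrArg Prod.snd (h (n + 1))
      simpa using this
  dd y := by ext <;> simp [D.dd, E.dd, h.d]
  pd n y := by
    ext <;> simp [D.pd, E.pd, h.p]
  pe j hj n y := by simp [D.pe j hj, E.pe j hj]
  ee j hj y := by simp [D.ee j hj, E.ee j hj]
  eeq j hj k hk hjk y := by simp [D.eeq j hj k hk hjk, E.eeq j hj k hk hjk]
  de j hj y := by
    ext
    · simp [D.de j hj, h.e j hj]
      abel
    · simp [E.de j hj]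

lemma DGm.resolve [IsNoetherianRing S] {c : ℕ} (m : ℕ) : ∀ (X : Type) [AddCommGroup X] [Module S X]
    [Module.Finite S X] (D : DGm x {i | i < c} X),
    HasProjectiveDimensionLT (ModuleCat.of S X) (m + 1) →
    ∃ (G : Type) (_ : AddCommGroup G) (_ : Module S G) (_ : Module.Finite S G)
      (_ : Module.Projective S G) (E : DGm x {i | i < c} G) (f : G →ₗ[S] X),
      Function.Surjective f ∧ DGc E D {i | i < c} f ∧
      ∀ z, E.d z = 0 → f z = 0 → ∃ w, f w = 0 ∧ E.d w = z := by
  induction m with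
  | zero =>
    intro X _ _ _ D hpd
    have hp : Module.Projective S X :=
      (IsProjective.iff_projective X).2 (projective_iff_hasProjectiveDimensionLT_one.2 hpd)
    exact ⟨X, inferInstance, inferInstance, inferInstance, hp, D, LinearMap.id,
      Function.surjective_id, ⟨fun _ _ => rfl, fun _ => rfl, fun _ _ _ => rfl⟩,
      fun z _ hz => ⟨0, rfl, by rw [map_zero]; exact hz.symm⟩⟩
  | succ m ih =>
    intro X _ _ _ D hpd
    obtain ⟨P, _, _, _, _, E, π, hπ, hc⟩ := D.cover c le_rfl
    change DGc E D _ π at hc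
    have p1 : Projective (ModuleCat.of S P) := (IsProjective.iff_projective P).1 inferInstance
    have hk := ((ker_shortExact π hπ).hasProjectiveDimensionLT_X₃_iff m p1).1 hpd
    obtain ⟨G, _, _, _, _, E', g, hg, hc', hac⟩ := ih (LinearMap.ker π) (DGm.ker E D π hc) hk
    have hcg : DGc E' E {i | i < c} ((LinearMap.ker π).subtype ∘ₗ g) := by
      refine ⟨fun n y => ?_, fun y => ?_, fun i hi y => ?_⟩
      · exact congrArg Subtype.val (hc'.p n y)
      · exact congrArg Subtype.val (hc'.d y)
      · have := congrArg Subtype.val (hc'.e i hi y)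
        simp only [DGm.ker, dif_pos hi] at this
        exact this
    refine ⟨P × G, inferInstance, inferInstance, inferInstance, inferInstance,
      DGm.cone E E' _ hcg, π ∘ₗ LinearMap.fst S _ _, ?_, ?_, ?_⟩
    · intro y
      obtain ⟨v, rfl⟩ := hπ y
      exact ⟨(v, 0), rfl⟩
    · refine ⟨fun n y => ?_, fun y => ?_, fun i hi y => ?_⟩
      · simp [DGm.cone, hc.p]
      · simp [DGm.cone, hc.d]
      · simp [DGm.cone, hc.e i hi]
    · rintro ⟨a, b⟩ hd ha
      have ha' : π a = 0 := ha
      obtain ⟨b0, hb0⟩ := hg ⟨a, ha'⟩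
      have h1 : E.d a + (g b : P) = 0 := congrArg Prod.fst hd
      have h2 : - E'.d b = 0 := congrArg Prod.snd hd
      have hgb : g (b + E'.d b0) = 0 := by
        rw [map_add, hc'.d, hb0]
        apply Subtype.ext
        rw [add_comm] at h1
        exact h1
      obtain ⟨w, hw, hdw⟩ := hac (b + E'.d b0) (by rw [map_add, E'.dd, neg_eq_zero.1 h2, add_zero]) hgb
      refine ⟨(0, b0 - w), ?_, ?_⟩
      · simp
      · ext
        · simp [DGm.cone, hb0, hw]
        · simp [DGm.cone, hdw]

end DG

section Shamash

open scoped Pointwise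

variable {S : Type} [CommRing S] {x : ℕ → S} {I : Set ℕ}
variable {X : Type} [AddCommGroup X] [Module S X] {Y : Type} [AddCommGroup Y] [Module S Y]

lemma qst_eq_zero_iff (r : S) (y : X) :
    (Submodule.Quotient.mk y : QuotSMulTop r X) = 0 ↔ ∃ w, y = r • w := by
  rw [Submodule.Quotient.mk_eq_zero, Submodule.mem_smul_pointwise_iff_exists]
  simp [eq_comm]

lemma qst_smul (r : S) (q : QuotSMulTop r X) : r • q = 0 := by
  obtain ⟨y, rfl⟩ := Submodule.Quotient.mk_surjective _ q
  exact (qst_eq_zero_iff r _).2 ⟨y, rfl⟩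

lemma qst_ind (r : S) {P : QuotSMulTop r X → Prop} (h : ∀ y : X, P (Submodule.Quotient.mk y))
    (q : QuotSMulTop r X) : P q := by
  obtain ⟨y, rfl⟩ := Submodule.Quotient.mk_surjective _ q
  exact h y

/-- reduction modulo an element -/
noncomputable def DGm.quot (D : DGm x I X) (r : S) : DGm x I (QuotSMulTop r X) where
  p n := QuotSMulTop.map r (D.p n)
  d := QuotSMulTop.map r D.d
  e i := QuotSMulTop.map r (D.e i)
  pp n := qst_ind r fun y => by simp only [QuotSMulTop.map_apply_mk, D.pp]
  pq n m := qst_ind r fun y h => by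
    simp only [QuotSMulTop.map_apply_mk, D.pq _ _ _ h, Submodule.Quotient.mk_zero]
  pneg n := qst_ind r fun y h => by
    simp only [QuotSMulTop.map_apply_mk, D.pneg _ _ h, Submodule.Quotient.mk_zero]
  fin := qst_ind r fun y => by
    obtain ⟨L, hL⟩ := D.fin y
    exact ⟨L, fun n hn => by
      simp only [QuotSMulTop.map_apply_mk, hL n hn, Submodule.Quotient.mk_zero]⟩
  tot := qst_ind r fun y h => by
    obtain ⟨L, hL⟩ := D.fin y
    rw [← D.sum_eq y L hL]
    have := map_sum (Submodule.mkQ (r • (⊤ : Submodule S X))) (fun k : ℕ => D.p (k : ℤ) y)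
      (Finset.range L)
    simp only [Submodule.mkQ_apply] at this
    rw [this]
    refine Finset.sum_eq_zero fun k _ => ?_
    have := h k
    rwa [QuotSMulTop.map_apply_mk] at this
  dd := qst_ind r fun y => by
    simp only [QuotSMulTop.map_apply_mk, D.dd, Submodule.Quotient.mk_zero]
  pd n := qst_ind r fun y => by simp only [QuotSMulTop.map_apply_mk, D.pd]
  pe i hi n := qst_ind r fun y => by simp only [QuotSMulTop.map_apply_mk, D.pe i hi]
  ee i hi := qst_ind r fun y => by
    simp only [QuotSMulTop.map_apply_mk, D.ee i hi, Submodule.Quotient.mk_zero]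
  eeq i hi j hj hij := qst_ind r fun y => by
    simp only [QuotSMulTop.map_apply_mk, D.eeq i hi j hj hij, Submodule.Quotient.mk_neg]
  de i hi := qst_ind r fun y => by
    simp only [QuotSMulTop.map_apply_mk, D.de i hi, Submodule.Quotient.mk_sub,
      Submodule.Quotient.mk_smul]

/-- coefficientwise map -/
noncomputable def fmap (T : ℕ → X →ₗ[S] X) : (ℕ →₀ X) →ₗ[S] (ℕ →₀ X) :=
  Finsupp.lsum S fun k => Finsupp.lsingle k ∘ₗ T k

lemma fmap_apply (T : ℕ → X →ₗ[S] X) (z : ℕ →₀ X) (k : ℕ) : fmap T z k = T k (z k) := by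
  classical
  induction z using Finsupp.induction_linear with
  | zero => simp
  | add f g hf hg => simp [hf, hg]
  | single a b =>
    simp [fmap, Finsupp.single_apply]
    split_ifs with h
    · subst h; rfl
    · simp

/-- shift of coefficients -/
noncomputable def fshift : (ℕ →₀ X) →ₗ[S] (ℕ →₀ X) :=
  Finsupp.lcomapDomain Nat.succ Nat.succ_injective

lemma fshift_apply (z : ℕ →₀ X) (k : ℕ) : fshift (S := S) z k = z (k + 1) := rfl

/-- the Shamash / Eisenbud construction -/
noncomputable def DGm.poly (D : DGm x I X) (i : ℕ) (hi : i ∈ I) (hx : ∀ y : X, x i • y = 0) :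
    DGm x (I \ {i}) (ℕ →₀ X) where
  p n := fmap fun k => D.p (n - 2 * k)
  d := fmap (fun _ => D.d) + fshift ∘ₗ fmap (fun _ => D.e i)
  e j := fmap (fun _ => D.e j)
  pp n y := by ext k; simp only [fmap_apply, D.pp]
  pq n m y h := by
    ext k; simp only [fmap_apply, D.pq (n - 2 * k) (m - 2 * k) _ (by omega)]; rfl
  pneg n y h := by
    ext k; simp only [fmap_apply, D.pneg (n - 2 * k) _ (by omega)]; rfl
  fin y := by
    choose L hL using fun k => D.fin (y k)
    refine ⟨y.support.sup fun k => L k + 2 * k, fun n hn => ?_⟩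
    ext k
    rw [fmap_apply]
    by_cases hk : y k = 0
    · rw [hk, map_zero]; rfl
    · have := Finset.le_sup (f := fun k => L k + 2 * k) (Finsupp.mem_support_iff.2 hk)
      have h2 : L k + 2 * k ≤ y.support.sup fun k => L k + 2 * k := this
      exact hL k _ (by omega)
  tot y h := by
    ext k
    refine D.tot _ fun n => ?_
    have := DFunLike.congr_fun (h (n + 2 * k)) k
    rw [fmap_apply] at this
    simpa using this
  dd y := by
    ext k
    simp only [LinearMap.add_apply, LinearMap.comp_apply, Finsupp.add_apply, fshift_apply,
      fmap_apply, map_add, D.dd, D.ee i hi, D.de i hi, hx]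
    simp
  pd n y := by
    ext k
    simp only [LinearMap.add_apply, LinearMap.comp_apply, Finsupp.add_apply, fshift_apply,
      fmap_apply, map_add, D.pd, D.pe i hi]
    congr 4
    · ring
    · push_cast; ring
  pe j hj n y := by
    ext k
    simp only [fmap_apply, D.pe j hj.1]
    congr 3
    ring
  ee j hj y := by
    ext k; simp only [fmap_apply, D.ee j hj.1]; rfl
  eeq j hj k hk hjk y := by
    ext l; simp only [fmap_apply, D.eeq j hj.1 k hk.1 hjk, Finsupp.neg_apply]
  de j hj y := by
    ext k
    simp only [LinearMap.add_apply, LinearMap.comp_apply, Finsupp.add_apply, fshift_apply,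
      Finsupp.sub_apply, Finsupp.smul_apply,
      fmap_apply, map_add, D.de j hj.1, D.eeq i hi j hj.1 (fun h => hj.2 h.symm)]
    abel

lemma poly_d_apply (D : DGm x I X) (i : ℕ) (hi : i ∈ I) (hx : ∀ y : X, x i • y = 0)
    (z : ℕ →₀ X) (k : ℕ) : (D.poly i hi hx).d z k = D.d (z k) + D.e i (z (k + 1)) := by
  simp only [DGm.poly, LinearMap.add_apply, LinearMap.comp_apply, Finsupp.add_apply, fshift_apply,
      fmap_apply]

/-- resolutions -/
structure DGr (D : DGm x I X) (f : X →ₗ[S] Y) : Prop where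
  surj : Function.Surjective f
  fd : ∀ y, f (D.d y) = 0
  fp : ∀ n y, n ≠ 0 → f (D.p n y) = 0
  fe : ∀ i ∈ I, ∀ y, f (D.e i y) = 0
  ex : ∀ z, D.d z = 0 → f z = 0 → ∃ w, D.d w = z

/-- one full step -/
noncomputable def DGm.sham (D : DGm x I X) (i : ℕ) (hi : i ∈ I) :
    DGm x (I \ {i}) (ℕ →₀ QuotSMulTop (x i) X) :=
  (D.quot (x i)).poly i hi (qst_smul (x i))

lemma sham_d_apply (D : DGm x I X) (i : ℕ) (hi : i ∈ I)
    (z : ℕ →₀ QuotSMulTop (x i) X) (k : ℕ) :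
    (D.sham i hi).d z k = QuotSMulTop.map (x i) D.d (z k)
      + QuotSMulTop.map (x i) (D.e i) (z (k + 1)) :=
  poly_d_apply _ _ _ _ _ _

/-- factor a map through the quotient -/
noncomputable def qlift (r : S) (f : X →ₗ[S] Y) (hr : ∀ y : Y, r • y = 0) :
    QuotSMulTop r X →ₗ[S] Y :=
  Submodule.liftQ _ f (by
    intro y hy
    rw [Submodule.mem_smul_pointwise_iff_exists] at hy
    obtain ⟨w, _, rfl⟩ := hy
    rw [LinearMap.mem_ker, map_smul, hr])

lemma qlift_mk (r : S) (f : X →ₗ[S] Y) (hr : ∀ y : Y, r • y = 0) (y : X) :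
    qlift r f hr (Submodule.Quotient.mk y) = f y := rfl

/-- exactness of the Shamash resolution -/
theorem DGr.sham {D : DGm x I X} {f : X →ₗ[S] Y} (h : DGr D f) (i : ℕ) (hi : i ∈ I)
    (hY : ∀ y : Y, x i • y = 0) (hreg : ∀ y : X, x i • y = 0 → y = 0) :
    DGr (D.sham i hi) (qlift (x i) f hY ∘ₗ Finsupp.lapply 0) := by
  have qd : ∀ q, qlift (x i) f hY (QuotSMulTop.map (x i) D.d q) = 0 := by
    refine qst_ind _ fun y => ?_
    rw [QuotSMulTop.map_apply_mk, qlift_mk, h.fd]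
  have qe : ∀ j ∈ I, ∀ q, qlift (x i) f hY (QuotSMulTop.map (x i) (D.e j) q) = 0 := by
    intro j hj
    refine qst_ind _ fun y => ?_
    rw [QuotSMulTop.map_apply_mk, qlift_mk, h.fe j hj]
  have fd : ∀ z, (qlift (x i) f hY) (((D.sham i hi).d z) 0) = 0 := by
    intro z
    rw [sham_d_apply, map_add, qd, qe i hi, add_zero]
  refine ⟨?_, fd, ?_, ?_, ?_⟩
  · intro y
    obtain ⟨v, rfl⟩ := h.surj y
    exact ⟨Finsupp.single 0 (Submodule.Quotient.mk v), by simp [qlift_mk]⟩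
  · intro n z hn
    simp only [LinearMap.comp_apply, Finsupp.lapply_apply, DGm.sham, DGm.poly, fmap_apply]
    generalize z 0 = q
    revert q
    refine qst_ind _ fun y => ?_
    simp only [DGm.quot]
    rw [QuotSMulTop.map_apply_mk, qlift_mk, h.fp _ _ (by simpa using hn)]
  · intro j hj z
    simp only [LinearMap.comp_apply, Finsupp.lapply_apply, DGm.sham, DGm.poly, fmap_apply]
    exact qe j hj.1 _
  · have key : ∀ K : ℕ, ∀ z : ℕ →₀ QuotSMulTop (x i) X, (∀ k, K < k → z k = 0) →
        (D.sham i hi).d z = 0 → qlift (x i) f hY (z 0) = 0 → ∃ w, (D.sham i hi).d w = z := by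
      intro K
      induction K with
      | zero =>
        intro z hz hdz hfz
        obtain ⟨a, ha⟩ := Submodule.Quotient.mk_surjective _ (z 0)
        have h0 := DFunLike.congr_fun hdz 0
        rw [sham_d_apply, hz (0 + 1) (by omega), LinearMap.map_zero, add_zero, ← ha,
          QuotSMulTop.map_apply_mk] at h0
        obtain ⟨w, hw⟩ := (qst_eq_zero_iff _ _).1 h0
        rw [← ha, qlift_mk] at hfz
        have hdw : D.d w = 0 := hreg _ (by rw [← map_smul, ← hw, D.dd])
        obtain ⟨u, hu⟩ := h.ex (a - D.e i w) (by
          rw [map_sub, D.de i hi, hdw, map_zero, sub_zero, hw, sub_self])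
          (by rw [map_sub, h.fe i hi, hfz, sub_zero])
        refine ⟨Finsupp.single 0 (Submodule.Quotient.mk u) + Finsupp.single 1 (Submodule.Quotient.mk w), ?_⟩
        ext k
        rw [sham_d_apply]
        rcases k with _ | _ | k
        · simp only [Finsupp.add_apply, Finsupp.single_apply]
          simp only [if_true, zero_add, one_ne_zero, zero_ne_one, if_false, add_zero]
          rw [QuotSMulTop.map_apply_mk, QuotSMulTop.map_apply_mk, hu, ← ha,
            ← Submodule.Quotient.mk_add, sub_add_cancel]
        · rw [hz (0 + 1) (by omega)]
          simp [hdw]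
        · rw [hz _ (by omega)]
          simp
      | succ K ih =>
        intro z hz hdz hfz
        obtain ⟨a, ha⟩ := Submodule.Quotient.mk_surjective _ (z (K + 1))
        obtain ⟨b, hb⟩ := Submodule.Quotient.mk_surjective _ (z K)
        have h1 := DFunLike.congr_fun hdz (K + 1)
        rw [sham_d_apply, hz (K + 1 + 1) (by omega), LinearMap.map_zero, add_zero, ← ha,
          QuotSMulTop.map_apply_mk] at h1
        obtain ⟨w, hw⟩ := (qst_eq_zero_iff _ _).1 h1
        have h0 := DFunLike.congr_fun hdz K
        rw [sham_d_apply, ← ha, ← hb, QuotSMulTop.map_apply_mk, QuotSMulTop.map_apply_mk,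
          ← Submodule.Quotient.mk_add] at h0
        obtain ⟨v, hv⟩ := (qst_eq_zero_iff _ _).1 h0
        have hdw : D.d w = 0 := hreg _ (by rw [← map_smul, ← hw, D.dd])
        have hav : a = D.d v + D.e i w := by
          rw [← sub_eq_zero]
          apply hreg
          have h2 := congrArg D.d hv
          rw [map_add, D.dd, zero_add, D.de i hi, hw, map_smul, map_smul] at h2
          rw [smul_sub, smul_add, ← h2]
          abel
        set t : ℕ →₀ QuotSMulTop (x i) X :=
          Finsupp.single (K + 1) (Submodule.Quotient.mk v) +
            Finsupp.single (K + 2) (Submodule.Quotient.mk w) with ht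
        obtain ⟨w', hw'⟩ := ih (z - (D.sham i hi).d t) (by
          intro k hk
          rw [Finsupp.sub_apply, sham_d_apply]
          obtain ⟨k, rfl⟩ := Nat.exists_eq_add_of_lt hk
          rcases k with _ | _ | k
          · have e1 : t (K + 0 + 1) = Submodule.Quotient.mk v := by simp [ht]
            have e2 : t (K + 0 + 1 + 1) = Submodule.Quotient.mk w := by simp [ht]
            rw [e1, e2, QuotSMulTop.map_apply_mk, QuotSMulTop.map_apply_mk,
              ← Submodule.Quotient.mk_add, ← hav, add_zero, ha, sub_self]
          · have e1 : t (K + (0 + 1) + 1) = Submodule.Quotient.mk w := by simp [ht]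
            have e2 : t (K + (0 + 1) + 1 + 1) = 0 := by
              simp only [ht, Finsupp.add_apply, Finsupp.single_apply]
              rw [if_neg (by omega), if_neg (by omega), add_zero]
            rw [e1, e2, QuotSMulTop.map_apply_mk, hdw, hz _ (by omega)]
            simp
          · have e1 : t (K + (k + 1 + 1) + 1) = 0 := by
              simp only [ht, Finsupp.add_apply, Finsupp.single_apply]
              rw [if_neg (by omega), if_neg (by omega), add_zero]
            have e2 : t (K + (k + 1 + 1) + 1 + 1) = 0 := by
              simp only [ht, Finsupp.add_apply, Finsupp.single_apply]
              rw [if_neg (by omega), if_neg (by omega), add_zero]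
            rw [e1, e2, hz _ (by omega)]
            simp)
          (by rw [map_sub, (D.sham i hi).dd, hdz, sub_zero])
          (by rw [Finsupp.sub_apply, map_sub, fd, hfz, sub_zero])
        exact ⟨w' + t, by rw [map_add, hw', sub_add_cancel]⟩
    intro z hz hfz
    refine key (z.support.sup id) z ?_ hz hfz
    intro k hk
    by_contra hne
    have := Finset.le_sup (f := id) (Finsupp.mem_support_iff.2 hne)
    simp only [id] at this
    omega

lemma finsupp_weaklyRegular (rs : List S) (h : RingTheory.Sequence.IsWeaklyRegular X rs) :
    RingTheory.Sequence.IsWeaklyRegular (ℕ →₀ X) rs := by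
  have := h.isWeaklyRegular_lTensor (M₂ := (ℕ →₀ S))
  exact ((TensorProduct.finsuppScalarLeft S X ℕ).isWeaklyRegular_congr rs).1 this

/-- relative projectivity -/
def RelProj (x : ℕ → S) (k : ℕ) (F : Type) [AddCommGroup F] [Module S F] : Prop :=
  ∀ (U V : Type) [AddCommGroup U] [Module S U] [AddCommGroup V] [Module S V],
    (∀ i < k, ∀ u : U, x i • u = 0) → (∀ i < k, ∀ v : V, x i • v = 0) →
    ∀ (g : U →ₗ[S] V), Function.Surjective g → ∀ φ : F →ₗ[S] V, ∃ ψ : F →ₗ[S] U, g ∘ₗ ψ = φ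

lemma RelProj.step {k : ℕ} (h : RelProj x k X) :
    RelProj x (k + 1) (ℕ →₀ QuotSMulTop (x k) X) := by
  intro U V _ _ _ _ hU hV g hg φ
  choose ψ hψ using fun j : ℕ => h U V (fun i hi => hU i (by omega)) (fun i hi => hV i (by omega))
    g hg (φ ∘ₗ Finsupp.lsingle j ∘ₗ Submodule.mkQ _)
  refine ⟨Finsupp.lsum S fun j => qlift (x k) (ψ j) (hU k (by omega)), ?_⟩
  ext j q
  simp only [LinearMap.comp_apply, Finsupp.lsingle_apply, Finsupp.lsum_single]
  exact LinearMap.congr_fun (hψ j) q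

lemma killed_step {k : ℕ} (h : ∀ i < k, ∀ y : X, x i • y = 0) :
    ∀ i < k + 1, ∀ z : ℕ →₀ QuotSMulTop (x k) X, x i • z = 0 := by
  intro i hi z
  ext j
  rw [Finsupp.smul_apply]
  obtain ⟨y, hy⟩ := Submodule.Quotient.mk_surjective _ (z j)
  rcases Nat.lt_succ_iff_lt_or_eq.1 hi with hi | rfl
  · rw [← hy, ← Submodule.Quotient.mk_smul, h i hi]; rfl
  · exact qst_smul _ _

end Shamash

section Dual

open Polynomial

/-- Dual data of a `DGm`: a model `C` for the (graded) dual `Hom(X,N)` with action of a polynomial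
ring. -/
structure Dual {S : Type} [CommRing S] {x : ℕ → S} {I : Set ℕ} {X : Type} [AddCommGroup X]
    [Module S X] (D : DGm x I X) (N : Type) [AddCommGroup N] [Module S N]
    (R C : Type) [CommRing R] [Algebra S R] [AddCommGroup C] [Module S C] [Module R C]
    [IsScalarTower S R C] where
  gens : Set R
  adj : Algebra.adjoin S gens = ⊤
  p : ℤ → C →ₗ[S] C
  d : C →ₗ[R] C
  e : ℕ → C →ₗ[R] C
  pchi : ∀ χ ∈ gens, ∀ n c, p n (χ • c) = χ • p (n - 2) c
  pair : C →ₗ[S] X →ₗ[S] N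
  inj : Function.Injective pair
  pair_d : ∀ c y, pair (d c) y = pair c (D.d y)
  pair_e : ∀ i c y, pair (e i c) y = pair c (D.e i y)
  pair_p : ∀ n c y, pair (p n c) y = pair c (D.p n y)
  surj : ∀ (φ : X →ₗ[S] N) (n : ℤ), ∃ c, ∀ y, pair c y = φ (D.p n y)
  fin : ∀ c, ∃ L : ℕ, ∀ n : ℤ, (L : ℤ) ≤ n → p n c = 0

variable {S : Type} [CommRing S] {x : ℕ → S} {I : Set ℕ}
variable {X : Type} [AddCommGroup X] [Module S X] {N : Type} [AddCommGroup N] [Module S N]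
variable {R C : Type} [CommRing R] [Algebra S R] [AddCommGroup C] [Module S C] [Module R C]
    [IsScalarTower S R C] {D : DGm x I X}

lemma Dual.ext' (E : Dual D N R C) {c c' : C} (h : ∀ y, E.pair c y = E.pair c' y) : c = c' :=
  E.inj (LinearMap.ext h)

lemma Dual.dd (E : Dual D N R C) (c : C) : E.d (E.d c) = 0 :=
  E.ext' fun y => by simp [E.pair_d, D.dd]

lemma Dual.pd (E : Dual D N R C) (n : ℤ) (c : C) : E.p n (E.d c) = E.d (E.p (n - 1) c) :=
  E.ext' fun y => by
    have := D.pd (n - 1) y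
    rw [sub_add_cancel] at this
    simp [E.pair_d, E.pair_p, this]

lemma Dual.pe (E : Dual D N R C) (i : ℕ) (hi : i ∈ I) (n : ℤ) (c : C) :
    E.p n (E.e i c) = E.e i (E.p (n + 1) c) :=
  E.ext' fun y => by
    have := D.pe i hi (n + 1) y
    rw [add_sub_cancel_right] at this
    simp [E.pair_e, E.pair_p, this]

lemma Dual.ee (E : Dual D N R C) (i : ℕ) (hi : i ∈ I) (c : C) : E.e i (E.e i c) = 0 :=
  E.ext' fun y => by simp [E.pair_e, D.ee i hi]

lemma Dual.kill (E : Dual D N R C) (r : S) (hN : ∀ n : N, r • n = 0) (c : C) : r • c = 0 :=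
  E.ext' fun y => by simp [hN]

lemma Dual.de (E : Dual D N R C) (i : ℕ) (hi : i ∈ I) (hN : ∀ n : N, x i • n = 0) (c : C) :
    E.d (E.e i c) = - E.e i (E.d c) :=
  E.ext' fun y => by
    have h := D.de i hi y
    have h2 : D.e i (D.d y) = x i • y - D.d (D.e i y) := by rw [h]; abel
    simp [E.pair_e, E.pair_d, h2, hN]

lemma Dual.pp (E : Dual D N R C) (n : ℤ) (c : C) : E.p n (E.p n c) = E.p n c :=
  E.ext' fun y => by simp [E.pair_p, D.pp]

lemma Dual.pq (E : Dual D N R C) (n m : ℤ) (h : n ≠ m) (c : C) : E.p n (E.p m c) = 0 :=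
  E.ext' fun y => by simp [E.pair_p, D.pq _ _ _ h.symm]

lemma Dual.pneg (E : Dual D N R C) (n : ℤ) (h : n < 0) (c : C) : E.p n c = 0 :=
  E.ext' fun y => by simp [E.pair_p, D.pneg _ _ h]

/-- restriction of the index set -/
def Dual.mono' {J : Set ℕ} {D' : DGm x J X} (E : Dual D N R C) (hp : D'.p = D.p) (hd : D'.d = D.d)
    (he : D'.e = D.e) : Dual D' N R C where
  gens := E.gens
  adj := E.adj
  p := E.p
  d := E.d
  e := E.e
  pchi := E.pchi
  pair := E.pair
  inj := E.inj
  pair_d := by rw [hd]; exact E.pair_d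
  pair_e := by rw [he]; exact E.pair_e
  pair_p := by rw [hp]; exact E.pair_p
  surj := by rw [hp]; exact E.surj
  fin := E.fin

/-- induced map on polynomial modules -/
noncomputable def pmap (f : C →ₗ[R] C) : PolynomialModule R C →ₗ[R[X]] PolynomialModule R C where
  toFun := PolynomialModule.map R f
  map_add' := map_add _
  map_smul' r m := by
    rw [PolynomialModule.map_smul]
    simp

lemma pmap_coeff (f : C →ₗ[R] C) (c : PolynomialModule R C) (k : ℕ) :
    (pmap f c).coeff k = f (c.coeff k) := rfl

lemma X_smul_coeff_zero (c : PolynomialModule R C) : ((Polynomial.X : R[X]) • c).coeff 0 = 0 := by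
  rw [← Polynomial.monomial_one_one_eq_X, PolynomialModule.monomial_smul_apply]
  simp

lemma X_smul_coeff_succ (c : PolynomialModule R C) (k : ℕ) :
    ((Polynomial.X : R[X]) • c).coeff (k + 1) = c.coeff k := by
  rw [← Polynomial.monomial_one_one_eq_X, PolynomialModule.monomial_smul_apply]
  simp

lemma C_smul_coeff (r : R) (c : PolynomialModule R C) (k : ℕ) :
    ((Polynomial.C r : R[X]) • c).coeff k = r • c.coeff k := by
  rw [← Polynomial.monomial_zero_left, PolynomialModule.monomial_smul_apply]
  simp

/-- coefficientwise map -/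
noncomputable def pmS (T : ℕ → C →ₗ[S] C) : PolynomialModule R C →ₗ[S] PolynomialModule R C :=
  (PolynomialModule.coeffLinearEquiv R S).symm.toLinearMap ∘ₗ fmap T ∘ₗ
    (PolynomialModule.coeffLinearEquiv R S).toLinearMap

lemma pmS_coeff (T : ℕ → C →ₗ[S] C) (c : PolynomialModule R C) (k : ℕ) :
    (pmS T c).coeff k = T k (c.coeff k) := fmap_apply _ _ _

lemma sham_d_single_zero (D : DGm x I X) (i : ℕ) (hi : i ∈ I) (y : X) :
    (D.sham i hi).d (Finsupp.single 0 (Submodule.Quotient.mk y)) =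
      Finsupp.single 0 (Submodule.Quotient.mk (D.d y)) := by
  ext k
  rw [sham_d_apply]
  rcases k with _ | k <;> simp

lemma sham_d_single_succ (D : DGm x I X) (i : ℕ) (hi : i ∈ I) (y : X) (j : ℕ) :
    (D.sham i hi).d (Finsupp.single (j + 1) (Submodule.Quotient.mk y)) =
      Finsupp.single (j + 1) (Submodule.Quotient.mk (D.d y)) +
      Finsupp.single j (Submodule.Quotient.mk (D.e i y)) := by
  ext k
  rw [sham_d_apply, Finsupp.add_apply]
  simp only [Finsupp.single_apply, add_left_inj]
  congr 1
  · split_ifs <;> simp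
  · split_ifs <;> simp

lemma sham_p_single (D : DGm x I X) (i : ℕ) (hi : i ∈ I) (y : X) (j : ℕ) (n : ℤ) :
    (D.sham i hi).p n (Finsupp.single j (Submodule.Quotient.mk y)) =
      Finsupp.single j (Submodule.Quotient.mk (D.p (n - 2 * j) y)) := by
  ext k
  simp only [DGm.sham, DGm.poly, fmap_apply, DGm.quot, Finsupp.single_apply]
  split_ifs with h
  · subst h; simp
  · simp

lemma sham_e_single (D : DGm x I X) (i : ℕ) (hi : i ∈ I) (y : X) (j l : ℕ) :
    (D.sham i hi).e l (Finsupp.single j (Submodule.Quotient.mk y)) =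
      Finsupp.single j (Submodule.Quotient.mk (D.e l y)) := by
  ext k
  simp only [DGm.sham, DGm.poly, fmap_apply, DGm.quot, Finsupp.single_apply]
  split_ifs with h
  · simp
  · simp

/-- the pairing of the Shamash step -/
noncomputable def spair (r : S) (hN : ∀ n : N, r • n = 0) (b : C →ₗ[S] X →ₗ[S] N) :
    PolynomialModule R C →ₗ[S] (ℕ →₀ QuotSMulTop r X) →ₗ[S] N where
  toFun c := Finsupp.lsum S fun k => qlift r (b (c.coeff k)) hN
  map_add' c c' := by
    ext k y
    simp [qlift]
  map_smul' s c := by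
    ext k y
    have : (s • c).coeff = s • c.coeff := rfl
    simp [qlift, this]

lemma spair_single (r : S) (hN : ∀ n : N, r • n = 0) (b : C →ₗ[S] X →ₗ[S] N)
    (c : PolynomialModule R C) (k : ℕ) (y : X) :
    spair r hN b c (Finsupp.single k (Submodule.Quotient.mk y)) = b (c.coeff k) y := by
  simp [spair, qlift]

lemma spair_ext {r : S} {f g : (ℕ →₀ QuotSMulTop r X) →ₗ[S] N}
    (h : ∀ k (y : X), f (Finsupp.single k (Submodule.Quotient.mk y)) =
      g (Finsupp.single k (Submodule.Quotient.mk y))) : f = g := by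
  ext k y
  exact h k y

/-- one step of the construction of the dual -/
noncomputable def Dual.step (E : Dual D N R C) (i : ℕ) (hi : i ∈ I) (hN : ∀ n : N, x i • n = 0) :
    Dual (D.sham i hi) N R[X] (PolynomialModule R C) where
  gens := insert Polynomial.X (Polynomial.C '' E.gens)
  adj := by
    rw [eq_top_iff]
    have hC : ∀ r : R, Polynomial.C r ∈
        Algebra.adjoin S (insert Polynomial.X (Polynomial.C '' E.gens) : Set R[X]) := by
      intro r
      have hr : r ∈ Algebra.adjoin S E.gens := by rw [E.adj]; trivial
      induction hr using Algebra.adjoin_induction with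
      | mem a ha => exact Algebra.subset_adjoin (Or.inr ⟨a, ha, rfl⟩)
      | algebraMap s => exact Subalgebra.algebraMap_mem _ s
      | add a b _ _ ha hb => rw [Polynomial.C_add]; exact add_mem ha hb
      | mul a b _ _ ha hb => rw [Polynomial.C_mul]; exact mul_mem ha hb
    intro f _
    induction f using Polynomial.induction_on' with
    | add f g hf hg => exact add_mem (hf trivial) (hg trivial)
    | monomial n a =>
      rw [← Polynomial.C_mul_X_pow_eq_monomial]
      exact Subalgebra.mul_mem _ (hC a)
        (Subalgebra.pow_mem _ (Algebra.subset_adjoin (Set.mem_insert _ _)) n)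
  p n := pmS fun k => E.p (n - 2 * k)
  d := pmap E.d + (Polynomial.X : R[X]) • pmap (E.e i)
  e j := pmap (E.e j)
  pchi := by
    rintro χ (rfl | ⟨r, hr, rfl⟩) n c
    · ext k
      rcases k with _ | k
      · rw [pmS_coeff, X_smul_coeff_zero, X_smul_coeff_zero, map_zero]
      · rw [pmS_coeff, X_smul_coeff_succ, X_smul_coeff_succ, pmS_coeff]
        congr 2
        push_cast; ring
    · ext k
      rw [pmS_coeff, C_smul_coeff, C_smul_coeff, pmS_coeff, E.pchi r hr]
      congr 3
      ring
  pair := spair (x i) hN E.pair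
  inj := by
    rw [injective_iff_map_eq_zero]
    intro c hc
    ext k
    refine E.ext' fun y => ?_
    rw [← spair_single (x i) hN, hc]
    simp
  pair_d c := LinearMap.congr_fun (g := spair (x i) hN E.pair c ∘ₗ (D.sham i hi).d) <| spair_ext fun k y => by
    rw [LinearMap.comp_apply, spair_single]
    simp only [LinearMap.add_apply, LinearMap.smul_apply, PolynomialModule.coeff_add,
      Finsupp.add_apply, map_add, pmap_coeff, E.pair_d]
    rcases k with _ | k
    · rw [X_smul_coeff_zero, sham_d_single_zero, spair_single]; simp
    · rw [X_smul_coeff_succ, sham_d_single_succ, LinearMap.map_add, spair_single, spair_single, pmap_coeff,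
        E.pair_e]
  pair_e j c := LinearMap.congr_fun (g := spair (x i) hN E.pair c ∘ₗ (D.sham i hi).e j) <| spair_ext fun k y => by
    rw [LinearMap.comp_apply, spair_single, sham_e_single, spair_single, pmap_coeff, E.pair_e]
  pair_p n c := LinearMap.congr_fun (g := spair (x i) hN E.pair c ∘ₗ (D.sham i hi).p n) <| spair_ext fun k y => by
    rw [LinearMap.comp_apply, spair_single, sham_p_single, spair_single, pmS_coeff, E.pair_p]
  surj φ n := by
    choose c hc using fun k : ℕ => E.surj (φ ∘ₗ Finsupp.lsingle k ∘ₗ Submodule.mkQ _) (n - 2 * k)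
    refine ⟨∑ k ∈ Finset.range (n.toNat + 1), PolynomialModule.single R k (c k),
      LinearMap.congr_fun (g := φ ∘ₗ (D.sham i hi).p n) <| spair_ext fun k y => ?_⟩
    rw [LinearMap.comp_apply, spair_single, sham_p_single]
    simp only [PolynomialModule.coeff_sum, PolynomialModule.coeff_single, Finsupp.finsetSum_apply,
      Finsupp.single_apply, Finset.sum_ite_eq', Finset.mem_range]
    split_ifs with h
    · rw [hc]; rfl
    · rw [D.pneg _ _ (by omega)]; simp
  fin c := by
    choose L hL using fun k => E.fin (c.coeff k)
    refine ⟨c.coeff.support.sup fun k => L k + 2 * k, fun n hn => ?_⟩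
    ext k
    rw [pmS_coeff]
    by_cases hk : c.coeff k = 0
    · rw [hk, map_zero]; rfl
    · have := Finset.le_sup (f := fun k => L k + 2 * k) (Finsupp.mem_support_iff.2 hk)
      have h2 : L k + 2 * k ≤ c.coeff.support.sup fun k => L k + 2 * k := this
      exact hL k _ (by omega)

lemma polyModule_finite [Module.Finite R C] : Module.Finite R[X] (PolynomialModule R C) := by
  obtain ⟨s, hs⟩ := Module.Finite.fg_top (R := R) (M := C)
  classical
  refine ⟨⟨s.image (PolynomialModule.single R 0), ?_⟩⟩
  rw [eq_top_iff]
  have h0 : ∀ c : C, PolynomialModule.single R 0 c ∈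
      Submodule.span R[X] (s.image (PolynomialModule.single R 0) : Set (PolynomialModule R C)) := by
    intro c
    have hc : c ∈ Submodule.span R (s : Set C) := by rw [hs]; trivial
    induction hc using Submodule.span_induction with
    | mem a ha => exact Submodule.subset_span (by simpa using ⟨a, ha, rfl⟩)
    | zero => rw [PolynomialModule.single_zero]; exact zero_mem _
    | add a b _ _ ha hb => rw [PolynomialModule.single_add]; exact add_mem ha hb
    | smul r a _ ha =>
      have := Submodule.smul_mem _ (monomial 0 r) ha
      rwa [PolynomialModule.monomial_smul_single] at this
  intro c _
  induction c using PolynomialModule.induction_linear with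
  | zero => exact zero_mem _
  | add a b ha hb => exact add_mem (ha trivial) (hb trivial)
  | single n m =>
    have := Submodule.smul_mem _ (monomial n (1 : R)) (h0 m)
    rwa [PolynomialModule.monomial_smul_single, one_smul, add_zero] at this

/-- vanishing of cohomology in degree `n` -/
def Dual.HZ (E : Dual D N R C) (n : ℤ) : Prop :=
  ∀ c, E.p n c = c → E.d c = 0 → ∃ b, E.d b = c

/-- vanishing property -/
def Dual.V (E : Dual D N R C) (m : ℤ) : Prop :=
  (∃ n0 : ℤ, ∀ n, n0 ≤ n → E.HZ n) → ∀ n, m < n → E.HZ n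

lemma step_d_coeff_zero (E : Dual D N R C) (i : ℕ) (hi : i ∈ I) (hN : ∀ n : N, x i • n = 0)
    (c : PolynomialModule R C) : ((E.step i hi hN).d c).coeff 0 = E.d (c.coeff 0) := by
  have : (E.step i hi hN).d c = pmap E.d c + (Polynomial.X : R[X]) • pmap (E.e i) c := rfl
  rw [this, PolynomialModule.coeff_add, Finsupp.add_apply, X_smul_coeff_zero, pmap_coeff, add_zero]

lemma step_d_coeff_succ (E : Dual D N R C) (i : ℕ) (hi : i ∈ I) (hN : ∀ n : N, x i • n = 0)
    (c : PolynomialModule R C) (k : ℕ) :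
    ((E.step i hi hN).d c).coeff (k + 1) = E.d (c.coeff (k + 1)) + E.e i (c.coeff k) := by
  have : (E.step i hi hN).d c = pmap E.d c + (Polynomial.X : R[X]) • pmap (E.e i) c := rfl
  rw [this, PolynomialModule.coeff_add, Finsupp.add_apply, X_smul_coeff_succ, pmap_coeff, pmap_coeff]

lemma step_p_coeff (E : Dual D N R C) (i : ℕ) (hi : i ∈ I) (hN : ∀ n : N, x i • n = 0)
    (c : PolynomialModule R C) (n : ℤ) (k : ℕ) :
    ((E.step i hi hN).p n c).coeff k = E.p (n - 2 * k) (c.coeff k) := pmS_coeff _ _ _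

lemma step_d_single (E : Dual D N R C) (i : ℕ) (hi : i ∈ I) (hN : ∀ n : N, x i • n = 0)
    (c : C) : (E.step i hi hN).d (PolynomialModule.single R 0 c) =
      PolynomialModule.single R 0 (E.d c) + (Polynomial.X : R[X]) • PolynomialModule.single R 0 (E.e i c) := by
  have : (E.step i hi hN).d (PolynomialModule.single R 0 c) =
    PolynomialModule.map R E.d (PolynomialModule.single R 0 c) +
    (Polynomial.X : R[X]) • PolynomialModule.map R (E.e i) (PolynomialModule.single R 0 c) := rfl
  rw [this, PolynomialModule.map_single, PolynomialModule.map_single]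

lemma step_p_single (E : Dual D N R C) (i : ℕ) (hi : i ∈ I) (hN : ∀ n : N, x i • n = 0)
    (c : C) (n : ℤ) : (E.step i hi hN).p n (PolynomialModule.single R 0 c) =
      PolynomialModule.single R 0 (E.p n c) := by
  ext k
  rw [step_p_coeff]
  rcases k with _ | k <;> simp

lemma exists_X_smul (c : PolynomialModule R C) (h : c.coeff 0 = 0) :
    ∃ w, c = (Polynomial.X : R[X]) • w := by
  refine ⟨PolynomialModule.ofCoeff R (fshift (S := R) c.coeff), ?_⟩
  ext k
  rcases k with _ | k
  · rw [X_smul_coeff_zero, h]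
  · rw [X_smul_coeff_succ]; rfl

lemma X_smul_inj {c c' : PolynomialModule R C} (h : (Polynomial.X : R[X]) • c = (Polynomial.X : R[X]) • c') : c = c' := by
  ext k
  rw [← X_smul_coeff_succ, h, X_smul_coeff_succ]

theorem Dual.V_step (E : Dual D N R C) (i : ℕ) (hi : i ∈ I) (hN : ∀ n : N, x i • n = 0) (m : ℤ)
    (hV : E.V m) : (E.step i hi hN).V (m - 1) := by
  rintro ⟨n0, h0⟩
  have hX : ∀ n c, (E.step i hi hN).p n ((Polynomial.X : R[X]) • c) =
      (Polynomial.X : R[X]) • (E.step i hi hN).p (n - 2) c :=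
    (E.step i hi hN).pchi Polynomial.X (Or.inl rfl)
  have h1 : ∀ n, n0 + 1 ≤ n → E.HZ n := by
    intro n hn c hpc hdc
    obtain ⟨b, hb⟩ := h0 (n - 1) (by omega) (PolynomialModule.single R 0 (E.e i c))
      (by rw [step_p_single, E.pe i hi, sub_add_cancel, hpc])
      (by rw [step_d_single, E.de i hi hN, hdc, E.ee i hi]; simp)
    have hb' : (E.step i hi hN).d ((E.step i hi hN).p (n - 2) b) =
        PolynomialModule.single R 0 (E.e i c) := by
      have := (E.step i hi hN).pd (n - 1) b
      rw [hb, step_p_single, E.pe i hi, sub_add_cancel, hpc, sub_sub] at this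
      exact this.symm
    obtain ⟨u, hu⟩ := h0 n (by omega) (PolynomialModule.single R 0 c -
        (Polynomial.X : R[X]) • (E.step i hi hN).p (n - 2) b)
      (by rw [map_sub, step_p_single, hpc, hX, (E.step i hi hN).pp])
      (by rw [map_sub, step_d_single, hdc, map_smul, hb']; simp)
    refine ⟨u.coeff 0, ?_⟩
    rw [← step_d_coeff_zero E i hi hN, hu]
    have : ∀ a b : PolynomialModule R C, (a - b).coeff 0 = a.coeff 0 - b.coeff 0 := fun _ _ => rfl
    rw [this, X_smul_coeff_zero]
    simp
  have h2 := hV ⟨n0 + 1, h1⟩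
  have h3 : ∀ k : ℕ, ∀ n, m - 1 < n → n0 - k ≤ n → (E.step i hi hN).HZ n := by
    intro k
    induction k with
    | zero => intro n _ hn; exact h0 n (by simpa using hn)
    | succ k ih =>
      intro n hmn hn z hpz hdz
      obtain ⟨u, hu⟩ := ih (n + 2) (by omega) (by push_cast at hn; omega) ((Polynomial.X : R[X]) • z)
        (by rw [hX, add_sub_cancel_right, hpz]) (by rw [map_smul, hdz, smul_zero])
      have hu' : (E.step i hi hN).d ((E.step i hi hN).p (n + 1) u) = (Polynomial.X : R[X]) • z := by
        have := (E.step i hi hN).pd (n + 2) u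
        rw [hu, hX, add_sub_cancel_right, hpz] at this
        rw [this]
        congr 3
        ring
      set u' := (E.step i hi hN).p (n + 1) u with hu'd
      obtain ⟨v, hv⟩ := h2 (n + 1) (by omega) (u'.coeff 0)
        (by rw [hu'd, step_p_coeff]
            have := E.pp (n + 1) (u.coeff 0)
            simpa using this)
        (by rw [← step_d_coeff_zero E i hi hN, hu', X_smul_coeff_zero])
      obtain ⟨w, hw⟩ := exists_X_smul
        (u' - (E.step i hi hN).d (PolynomialModule.single R 0 v)) (by
          have : ∀ a b : PolynomialModule R C, (a - b).coeff 0 = a.coeff 0 - b.coeff 0 :=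
            fun _ _ => rfl
          rw [this, step_d_coeff_zero]
          simp [hv])
      refine ⟨w, X_smul_inj ?_⟩
      rw [← map_smul, ← hw, map_sub, (E.step i hi hN).dd, hu', sub_zero]
  intro n hn
  exact h3 (n0 - n).toNat n hn (by omega)

end Dual

section Dichotomy

variable {S : Type} [CommRing S] {x : ℕ → S} {I : Set ℕ}
variable {X : Type} [AddCommGroup X] [Module S X] {N : Type} [AddCommGroup N] [Module S N]

theorem Dual.noeth {R C : Type} [CommRing R] [Algebra S R] [AddCommGroup C] [Module S C]
    [Module R C] [IsScalarTower S R C] {D : DGm x I X} [IsNoetherianRing R] [Module.Finite R C]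
    (E : Dual D N R C) : ∃ n0 : ℤ, ∀ n, n0 ≤ n → E.HZ n → E.HZ (n + 2) := by
  let T : ℕ →o Submodule R C :=
    ⟨fun k => Submodule.span R {c | ∃ m : ℤ, m ≤ k ∧ E.p m c = c ∧ E.d c = 0}, fun a b hab =>
      Submodule.span_mono fun c ⟨m, h1, h2⟩ => ⟨m, h1.trans (by exact_mod_cast hab), h2⟩⟩
  obtain ⟨n0, hn0⟩ := monotone_stabilizes_iff_noetherian.mpr
    (inferInstance : IsNoetherian R C) T
  let B : ℤ → Submodule S C := fun m =>
    Submodule.span S {c | ∃ χ ∈ E.gens, ∃ b, c = χ • b ∧ E.p (m - 2) b = b ∧ E.d b = 0}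
  have hds : ∀ (s : S) c, E.d (s • c) = s • E.d c := fun s c => by
    rw [← algebraMap_smul R s c, map_smul, algebraMap_smul]
  let W0 : Submodule S C :=
    { carrier := {z | ∀ m : ℤ, E.d (E.p m z) = 0 ∧ ((n0 : ℤ) < m → E.p m z ∈ B m)}
      zero_mem' := fun m => by simp
      add_mem' := fun {a b} ha hb m => by
        rw [map_add, map_add, (ha m).1, (hb m).1, add_zero]
        exact ⟨rfl, fun h => add_mem ((ha m).2 h) ((hb m).2 h)⟩
      smul_mem' := fun s a ha m => by
        rw [map_smul, hds, (ha m).1, smul_zero]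
        exact ⟨rfl, fun h => Submodule.smul_mem _ _ ((ha m).2 h)⟩ }
  have hW : ∀ r : R, ∀ z ∈ W0, r • z ∈ W0 := by
    intro r
    have hr : r ∈ Algebra.adjoin S E.gens := by rw [E.adj]; trivial
    induction hr using Algebra.adjoin_induction with
    | mem χ hχ =>
      intro z hz m
      rw [E.pchi χ hχ, map_smul, (hz _).1, smul_zero]
      exact ⟨rfl, fun _ => Submodule.subset_span ⟨χ, hχ, _, rfl, E.pp _ _, (hz _).1⟩⟩
    | algebraMap s => intro z hz; rw [algebraMap_smul]; exact Submodule.smul_mem _ _ hz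
    | add a b _ _ ha hb => intro z hz; rw [add_smul]; exact add_mem (ha z hz) (hb z hz)
    | mul a b _ _ ha hb => intro z hz; rw [mul_smul]; exact ha _ (hb z hz)
  let W : Submodule R C :=
    { carrier := W0, zero_mem' := W0.zero_mem, add_mem' := W0.add_mem, smul_mem' := hW }
  have hTW : T n0 ≤ W := by
    refine Submodule.span_le.2 ?_
    rintro c ⟨m', hm', hp, hd⟩ m
    by_cases h : m = m'
    · subst h
      rw [hp]
      exact ⟨hd, fun h => absurd hm' (by omega)⟩
    · have h0 : E.p m c = 0 := by rw [← hp, E.pq _ _ h]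
      rw [h0, map_zero]
      exact ⟨rfl, fun _ => zero_mem _⟩
  refine ⟨n0, fun n hn hz c hpc hdc => ?_⟩
  have hc : c ∈ T (n + 2).toNat := Submodule.subset_span ⟨n + 2, by omega, hpc, hdc⟩
  rw [← hn0 (n + 2).toNat (by omega)] at hc
  have hcB := (hTW hc (n + 2)).2 (by omega)
  rw [hpc] at hcB
  clear hc hpc hdc
  induction hcB using Submodule.span_induction with
  | mem a ha =>
    obtain ⟨χ, _, b, rfl, h1, h2⟩ := ha
    rw [add_sub_cancel_right] at h1
    obtain ⟨u, rfl⟩ := hz b h1 h2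
    exact ⟨χ • u, map_smul _ _ _⟩
  | zero => exact ⟨0, map_zero _⟩
  | add a b _ _ ha hb =>
    obtain ⟨u, rfl⟩ := ha
    obtain ⟨v, rfl⟩ := hb
    exact ⟨u + v, map_add _ _ _⟩
  | smul s a _ ha =>
    obtain ⟨u, rfl⟩ := ha
    exact ⟨s • u, hds _ _⟩

theorem Dual.dich {R C : Type} [CommRing R] [Algebra S R] [AddCommGroup C] [Module S C]
    [Module R C] [IsScalarTower S R C] {D : DGm x I X} [IsNoetherianRing R] [Module.Finite R C]
    (E : Dual D N R C) (m : ℤ) (hV : E.V m) : (∀ n : ℤ, m < n → E.HZ n) ∨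
      ∃ m0 : ℕ, (∀ n : ℕ, m0 ≤ n → Even n → ¬ E.HZ n) ∨ (∀ n : ℕ, m0 ≤ n → Odd n → ¬ E.HZ n) := by
  obtain ⟨n0, h0⟩ := E.noeth
  by_cases h1 : ∃ n : ℕ, n0.toNat ≤ n ∧ Even n ∧ E.HZ n
  · by_cases h2 : ∃ n : ℕ, n0.toNat ≤ n ∧ Odd n ∧ E.HZ n
    · left
      apply hV
      obtain ⟨a, ha, hae, haz⟩ := h1
      obtain ⟨b, hb, hbo, hbz⟩ := h2
      have key : ∀ a : ℕ, n0.toNat ≤ a → E.HZ a → ∀ k : ℕ, E.HZ (a + 2 * k) := by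
        intro a ha haz k
        induction k with
        | zero => simpa using haz
        | succ k ih =>
          have := h0 _ (by omega) ih
          convert this using 1
          push_cast; ring
      refine ⟨a + b, fun n hn => ?_⟩
      obtain ⟨k, rfl⟩ := Int.eq_ofNat_of_zero_le (show 0 ≤ n by omega)
      rcases Nat.even_or_odd k with hk | hk
      · obtain ⟨l, hl⟩ := hae
        obtain ⟨t, ht⟩ := hk
        have := key a ha haz (t - l)
        convert this using 1
        omega
      · obtain ⟨l, hl⟩ := hbo
        obtain ⟨t, ht⟩ := hk
        have := key b hb hbz (t - l)
        convert this using 1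
        omega
    · right
      exact ⟨n0.toNat, Or.inr fun n hn ho hz => h2 ⟨n, hn, ho, hz⟩⟩
  · right
    exact ⟨n0.toNat, Or.inl fun n hn ho hz => h1 ⟨n, hn, ho, hz⟩⟩

variable {A : Type} [CommRing A] [Algebra S A] [Module A X] [IsScalarTower S A X]
  [Module A N] [IsScalarTower S A N]
  {M : Type} [AddCommGroup M] [Module S M] [Module A M] [IsScalarTower S A M]

/-- the degree `n` part -/
noncomputable abbrev DGm.part (D : DGm x I X) (hA : Function.Surjective (algebraMap S A)) (n : ℕ) :
    Submodule A X :=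
  LinearMap.range ((D.p n).extendScalarsOfSurjective hA)

lemma DGm.part_p (D : DGm x I X) (hA : Function.Surjective (algebraMap S A)) (n : ℕ)
    (z : D.part hA n) : D.p n z = z := by
  obtain ⟨z, w, rfl⟩ := z
  exact D.pp n w

/-- the differential -/
noncomputable def DGm.partd (D : DGm x I X) (hA : Function.Surjective (algebraMap S A)) (n : ℕ) :
    D.part hA (n + 1) →ₗ[A] D.part hA n :=
  LinearMap.codRestrict _ (D.d.extendScalarsOfSurjective hA ∘ₗ Submodule.subtype _) (by
    intro z
    refine ⟨D.d z, ?_⟩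
    change D.p n (D.d z) = D.d z
    have := D.part_p hA _ z
    push_cast at this
    rw [D.pd, this])

lemma DGm.partd_coe (D : DGm x I X) (hA : Function.Surjective (algebraMap S A)) (n : ℕ)
    (z : D.part hA (n + 1)) : (D.partd hA n z : X) = D.d z := rfl

/-- projection -/
noncomputable def DGm.partp (D : DGm x I X) (hA : Function.Surjective (algebraMap S A)) (n : ℕ) :
    X →ₗ[S] D.part hA n :=
  (((D.p n).extendScalarsOfSurjective hA).rangeRestrict).restrictScalars S

lemma DGm.partp_coe (D : DGm x I X) (hA : Function.Surjective (algebraMap S A)) (n : ℕ)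
    (z : X) : (D.partp hA n z : X) = D.p n z := rfl

lemma DGm.partp_part (D : DGm x I X) (hA : Function.Surjective (algebraMap S A)) (n : ℕ)
    (z : D.part hA n) : D.partp hA n z = z := Subtype.ext (D.part_p hA n z)

lemma DGm.partp_d (D : DGm x I X) (hA : Function.Surjective (algebraMap S A)) (n : ℕ)
    (z : X) : D.partp hA n (D.d z) = D.partd hA n (D.partp hA (n + 1) z) := by
  apply Subtype.ext
  rw [DGm.partp_coe, DGm.partd_coe, DGm.partp_coe, D.pd]
  push_cast; rfl

lemma DGm.part_exact (D : DGm x I X) (hA : Function.Surjective (algebraMap S A)) {f : X →ₗ[S] M}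
    (h : DGr D f) (n : ℕ) : Function.Exact (D.partd hA (n + 1)) (D.partd hA n) := by
  intro z
  constructor
  · intro hz
    obtain ⟨w, hw⟩ := h.ex z (by simpa [DGm.partd_coe] using congrArg Subtype.val hz)
      (by rw [← D.part_p hA _ z]; exact h.fp _ _ (by omega))
    refine ⟨D.partp hA (n + 2) w, ?_⟩
    rw [← D.partp_d, hw, D.partp_part]
  · rintro ⟨w, rfl⟩
    apply Subtype.ext
    rw [DGm.partd_coe, DGm.partd_coe, D.dd]; rfl

/-- augmentation -/
noncomputable def DGm.partε (D : DGm x I X) (hA : Function.Surjective (algebraMap S A))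
    (f : X →ₗ[S] M) : D.part hA 0 →ₗ[A] M :=
  (f.extendScalarsOfSurjective hA) ∘ₗ Submodule.subtype _

lemma DGm.partε_surj (D : DGm x I X) (hA : Function.Surjective (algebraMap S A)) {f : X →ₗ[S] M}
    (h : DGr D f) : Function.Surjective (D.partε hA f) := by
  intro m
  obtain ⟨y, rfl⟩ := h.surj m
  refine ⟨D.partp hA 0 y, ?_⟩
  change f (D.p 0 y) = f y
  obtain ⟨L, hL⟩ := D.fin y
  conv_rhs => rw [← D.sum_eq y (L + 1) (fun n hn => hL n (by push_cast at hn; omega)), map_sum]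
  rw [Finset.sum_eq_single 0]
  · rfl
  · intro b _ hb
    exact h.fp _ _ (by exact_mod_cast hb)
  · intro h; simp at h

lemma DGm.partε_exact (D : DGm x I X) (hA : Function.Surjective (algebraMap S A)) {f : X →ₗ[S] M}
    (h : DGr D f) : Function.Exact (D.partd hA 0) (D.partε hA f) := by
  intro z
  constructor
  · intro hz
    obtain ⟨w, hw⟩ := h.ex z (by
      have h1 := D.pd (-1) z
      have h2 := D.part_p hA 0 z
      rw [D.pneg _ _ (by omega)] at h1
      simp only [Nat.cast_zero] at h2
      rw [neg_add_cancel, h2] at h1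
      exact h1.symm) hz
    refine ⟨D.partp hA 1 w, ?_⟩
    rw [← D.partp_d, hw, D.partp_part]
  · rintro ⟨w, rfl⟩
    exact h.fd _

lemma DGm.part_proj (D : DGm x I X) (hA : Function.Surjective (algebraMap S A))
    (hl : ∀ (U V : Type) [AddCommGroup U] [Module S U] [Module A U] [IsScalarTower S A U]
      [AddCommGroup V] [Module S V] [Module A V] [IsScalarTower S A V] (g : U →ₗ[S] V),
      Function.Surjective g → ∀ φ : X →ₗ[S] V, ∃ ψ : X →ₗ[S] U, g ∘ₗ ψ = φ) (n : ℕ) :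
    Module.Projective A (D.part hA n) := by
  refine Module.Projective.of_lifting_property'' fun g hg => ?_
  obtain ⟨ψ, hψ⟩ := hl _ _ (g.restrictScalars S) hg (D.partp hA n)
  refine ⟨(ψ.extendScalarsOfSurjective hA) ∘ₗ Submodule.subtype _, ?_⟩
  ext z
  have := LinearMap.congr_fun hψ (z : X)
  rw [D.partp_part] at this
  exact congrArg Subtype.val this

theorem Dual.hz_iff {R C : Type} [CommRing R] [Algebra S R] [AddCommGroup C] [Module S C]
    [Module R C] [IsScalarTower S R C] {D : DGm x I X}
    (E : Dual D N R C) (hA : Function.Surjective (algebraMap S A)) (n : ℕ) :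
    E.HZ (n + 1 : ℕ) ↔ HomEx (A := A) N (fun n => D.part hA n) (D.partd hA) n := by
  constructor
  · intro hz φ hφ
    obtain ⟨c, hc⟩ := E.surj (φ.restrictScalars S ∘ₗ D.partp hA (n + 1)) (n + 1 : ℕ)
    have hc' : ∀ y, E.pair c y = φ (D.partp hA (n + 1) y) := by
      intro y
      rw [hc]
      change φ (D.partp hA (n + 1) (D.partp hA (n + 1) y : X)) = _
      rw [D.partp_part]
    obtain ⟨b, hb⟩ := hz c (E.ext' fun y => by
        rw [E.pair_p, hc', hc']
        change φ (D.partp hA (n + 1) (D.partp hA (n + 1) y : X)) = _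
        rw [D.partp_part])
      (E.ext' fun y => by
        rw [E.pair_d, hc', D.partp_d]
        simpa using LinearMap.congr_fun hφ (D.partp hA (n + 2) y))
    refine ⟨((E.pair b).extendScalarsOfSurjective hA) ∘ₗ Submodule.subtype _, ?_⟩
    ext z
    change E.pair b (D.d z) = _
    rw [← E.pair_d, hb, hc', D.partp_part]
  · intro hz c hpc hdc
    obtain ⟨ψ, hψ⟩ := hz (((E.pair c).extendScalarsOfSurjective hA) ∘ₗ Submodule.subtype _) (by
      ext z
      change E.pair c (D.d z) = 0
      rw [← E.pair_d, hdc]; simp)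
    obtain ⟨b, hb⟩ := E.surj (ψ.restrictScalars S ∘ₗ D.partp hA n) n
    refine ⟨b, E.ext' fun y => ?_⟩
    rw [E.pair_d, hb]
    change ψ (D.partp hA n (D.partp hA n (D.d y) : X)) = _
    rw [D.partp_part, D.partp_d]
    have := LinearMap.congr_fun hψ (D.partp hA (n + 1) y)
    rw [LinearMap.comp_apply] at this
    rw [this]
    change E.pair c (D.p (n + 1 : ℕ) y) = _
    rw [← E.pair_p, hpc]

end Dichotomy

section Chain

open RingTheory.Sequence

variable {S : Type} [CommRing S] {x : ℕ → S} {I : Set ℕ}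
variable {X : Type} [AddCommGroup X] [Module S X] {N : Type} [AddCommGroup N] [Module S N]

/-- module concentrated in degree zero -/
noncomputable def DGm.conc (x : ℕ → S) (I : Set ℕ) (hX : ∀ i ∈ I, ∀ y : X, x i • y = 0) :
    DGm x I X where
  p n := if n = 0 then LinearMap.id else 0
  d := 0
  e _ := 0
  pp n y := by split_ifs <;> simp
  pq n m y h := by split_ifs <;> simp_all
  pneg n y h := by rw [if_neg (by omega)]; rfl
  fin y := ⟨1, fun n hn => by rw [if_neg (by omega)]; rfl⟩
  tot y h := by simpa using h 0
  dd y := rfl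
  pd n y := by simp
  pe i hi n y := by simp
  ee i hi y := rfl
  eeq i hi j hj h y := by simp
  de i hi y := by simp [hX i hi]

/-- the dual of a finite module -/
noncomputable def Dual.base [Module.Finite S X] (D : DGm x I X) (N : Type) [AddCommGroup N]
    [Module S N] : Dual D N S (X →ₗ[S] N) where
  gens := ∅
  adj := by
    rw [eq_top_iff]
    intro s _
    exact Subalgebra.algebraMap_mem _ s
  p n := LinearMap.lcomp S N (D.p n)
  d := LinearMap.lcomp S N D.d
  e i := LinearMap.lcomp S N (D.e i)
  pchi := by simp
  pair := LinearMap.id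
  inj := Function.injective_id
  pair_d _ _ := rfl
  pair_e _ _ _ := rfl
  pair_p _ _ _ := rfl
  surj φ n := ⟨φ ∘ₗ D.p n, fun _ => rfl⟩
  fin c := by
    obtain ⟨L, hL⟩ := D.unif
    refine ⟨L, fun n hn => ?_⟩
    ext y
    simp [hL y n hn]

lemma Dual.base_V [Module.Finite S X] [Module.Projective S X] (D : DGm x I X) (N : Type)
    [AddCommGroup N] [Module S N] {M : Type} [AddCommGroup M] [Module S M] {f : X →ₗ[S] M}
    (h : DGr D f) (m : ℕ) (hpd : HasProjectiveDimensionLT (ModuleCat.of S M) (m + 1)) :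
    (Dual.base D N).V m := by
  intro _ n hn
  have hA : Function.Surjective (algebraMap S S) := Function.surjective_id
  obtain ⟨k, rfl⟩ : ∃ k : ℕ, n = (k + 1 : ℕ) := ⟨n.toNat - 1, by omega⟩
  rw [Dual.hz_iff _ hA]
  refine homEx_of_pd _ _ (D.part_exact hA h) (D.part_proj hA ?_) (D.partε hA f)
    (D.partε_surj hA h) (D.partε_exact hA h) N k (m + 1) hpd (by omega)
  intro U V i1 i2 i3 i4 j1 j2 j3 j4 g hg φ
  clear i4 i3 j4 j3
  exact Module.projective_lifting_property g φ hg

theorem exists_module {A : Type} [CommRing A] [Algebra S A]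
    (hA : Function.Surjective (algebraMap S A))
    (h : ∀ s ∈ RingHom.ker (algebraMap S A), ∀ y : X, s • y = 0) :
    ∃ _ : Module A X, IsScalarTower S A X := by
  have ht : Module.IsTorsionBySet S X (RingHom.ker (algebraMap S A)) := fun y s => h s s.2 y
  let _ : Module (S ⧸ RingHom.ker (algebraMap S A)) X := ht.module
  let e := (RingHom.quotientKerEquivOfSurjective hA).symm
  let mA : Module A X := Module.compHom X (e : A →+* S ⧸ RingHom.ker (algebraMap S A))
  refine ⟨mA, ⟨fun s a y => ?_⟩⟩
  have h1 : e (algebraMap S A s) = Ideal.Quotient.mk _ s := by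
    rw [RingEquiv.symm_apply_eq]; rfl
  have h2 : ∀ (a : A) (y : X), a • y = e a • y := fun _ _ => rfl
  rw [Algebra.smul_def, mul_smul, h2 (algebraMap S A s), h1]
  rfl

theorem chain [IsNoetherianRing S] {c : ℕ} (m : ℕ) {M : Type} [AddCommGroup M] [Module S M]
    [Module.Finite S M] [Module.Finite S N]
    (hM : ∀ i < c, ∀ y : M, x i • y = 0) (hN : ∀ i < c, ∀ y : N, x i • y = 0)
    (hpd : HasProjectiveDimensionLT (ModuleCat.of S M) (m + 1))
    (hreg : IsWeaklyRegular S ((List.range c).map x)) (k : ℕ) (hk : k ≤ c) :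
    ∃ (F : Type) (_ : AddCommGroup F) (_ : Module S F) (D : DGm x {i | k ≤ i ∧ i < c} F)
      (f : F →ₗ[S] M) (R C : Type) (_ : CommRing R) (_ : Algebra S R) (_ : AddCommGroup C)
      (_ : Module S C) (_ : Module R C) (_ : IsScalarTower S R C) (E : Dual D N R C),
      DGr D f ∧ IsWeaklyRegular F (((List.range c).map x).drop k) ∧
      (∀ i < k, ∀ y : F, x i • y = 0) ∧ RelProj x k F ∧ IsNoetherianRing R ∧ Module.Finite R C ∧
      E.V ((m : ℤ) - k) := by
  induction k with
  | zero =>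
    obtain ⟨G, _, _, _, _, D0, f, hf, hc, hex⟩ := DGm.resolve (x := x) m M
      (DGm.conc x {i | i < c} hM) hpd
    let D : DGm x {i | 0 ≤ i ∧ i < c} G := D0.mono (fun i hi => hi.2)
    have hD : DGr D f :=
      ⟨hf, fun y => hc.d y, fun n y hn => by
          rw [show f (D.p n y) = _ from hc.p n y]
          simp [DGm.conc, hn], fun i hi y => hc.e i hi.2 y, fun z h1 h2 => by
          obtain ⟨w, _, hw⟩ := hex z h1 h2
          exact ⟨w, hw⟩⟩
    refine ⟨G, _, _, D, f, S, G →ₗ[S] N, inferInstance, inferInstance, inferInstance,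
      inferInstance, inferInstance, inferInstance, Dual.base D N, hD, ?_, by simp, ?_,
      inferInstance, inferInstance, ?_⟩
    · rw [List.drop_zero]
      exact ((TensorProduct.rid S G).isWeaklyRegular_congr _).1
        (hreg.isWeaklyRegular_lTensor (M₂ := G))
    · intro U V _ _ _ _ _ _ g hg φ
      exact Module.projective_lifting_property g φ hg
    · simpa using Dual.base_V D N hD m hpd
  | succ k ih =>
    obtain ⟨F, _, _, D, f, R, C, _, _, _, _, _, _, E, hD, hr, hkill, hrel, _, _, hV⟩ :=
      ih (by omega)
    have hi : k ∈ {i | k ≤ i ∧ i < c} := ⟨le_rfl, hk⟩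
    have hdrop : ((List.range c).map x).drop k = x k :: ((List.range c).map x).drop (k + 1) := by
      rw [List.drop_eq_getElem_cons (by simpa using hk)]
      simp
    rw [hdrop, isWeaklyRegular_cons_iff] at hr
    have hsub : {i | k + 1 ≤ i ∧ i < c} ⊆ {i | k ≤ i ∧ i < c} \ {k} := by
      rintro i ⟨h1, h2⟩
      refine ⟨⟨by omega, h2⟩, ?_⟩
      simp; omega
    have hs := hD.sham k hi (hM k hk) (fun y hy => hr.1 (by simpa using hy))
    refine ⟨ℕ →₀ QuotSMulTop (x k) F, inferInstance, inferInstance, (D.sham k hi).mono hsub, _,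
      Polynomial R, PolynomialModule R C, inferInstance, inferInstance, inferInstance,
      inferInstance, inferInstance, inferInstance,
      (E.step k hi (hN k hk)).mono' rfl rfl rfl,
      ⟨hs.surj, hs.fd, hs.fp, fun i hi => hs.fe i (hsub hi), hs.ex⟩, finsupp_weaklyRegular _ hr.2,
      killed_step hkill, hrel.step, inferInstance, polyModule_finite, ?_⟩
    have := E.V_step k hi (hN k hk) _ hV
    rw [sub_sub] at this
    push_cast
    exact this

theorem ci_dich [IsNoetherianRing S] {c : ℕ} (m : ℕ) {A : Type} [CommRing A] [Algebra S A]
    (hA : Function.Surjective (algebraMap S A))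
    (hker : RingHom.ker (algebraMap S A) = Ideal.span (x '' {i | i < c}))
    (hreg : IsWeaklyRegular S ((List.range c).map x))
    (hgl : ∀ (M : Type) [AddCommGroup M] [Module S M] [Module.Finite S M],
      HasProjectiveDimensionLT (ModuleCat.of S M) (m + 1))
    (M N : Type) [AddCommGroup M] [Module A M] [Module.Finite A M]
    [AddCommGroup N] [Module A N] [Module.Finite A N] :
    (∀ n : ℕ, (m : ℤ) - c < (n + 1 : ℕ) → Subsingleton (extGroup A M N (n + 1))) ∨
    ∃ m0 : ℕ, (∀ n : ℕ, m0 ≤ n + 1 → Even (n + 1) → ¬ Subsingleton (extGroup A M N (n + 1))) ∨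
      (∀ n : ℕ, m0 ≤ n + 1 → Odd (n + 1) → ¬ Subsingleton (extGroup A M N (n + 1))) := by
  let _ : Module S M := Module.compHom M (algebraMap S A)
  let _ : Module S N := Module.compHom N (algebraMap S A)
  have _ : IsScalarTower S A M := ⟨fun s a y => by
    rw [Algebra.smul_def, mul_smul]; rfl⟩
  have _ : IsScalarTower S A N := ⟨fun s a y => by
    rw [Algebra.smul_def, mul_smul]; rfl⟩
  have _ : Module.Finite S A := Module.Finite.of_surjective (Algebra.linearMap S A) hA
  have _ : Module.Finite S M := Module.Finite.trans A M
  have _ : Module.Finite S N := Module.Finite.trans A N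
  have hx0 : ∀ i < c, algebraMap S A (x i) = 0 := fun i hi => by
    have : x i ∈ RingHom.ker (algebraMap S A) := by
      rw [hker]; exact Ideal.subset_span ⟨i, hi, rfl⟩
    exact this
  have hkill : ∀ (U : Type) [AddCommGroup U] [Module S U] [Module A U] [IsScalarTower S A U],
      ∀ i < c, ∀ y : U, x i • y = 0 := by
    intro U _ _ _ _ i hi y
    rw [← algebraMap_smul A, hx0 i hi, zero_smul]
  obtain ⟨F, _, _, D, f, R, C, _, _, _, _, _, _, E, hD, -, hF, hrel, _, _, hV⟩ :=
    chain (c := c) m (hkill M) (hkill N) (hgl M) hreg c le_rfl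
  have hker' : ∀ s ∈ RingHom.ker (algebraMap S A), ∀ y : F, s • y = 0 := by
    intro s hs y
    rw [hker] at hs
    induction hs using Submodule.span_induction with
    | mem a ha => obtain ⟨i, hi, rfl⟩ := ha; exact hF i hi y
    | zero => exact zero_smul _ _
    | add a b _ _ ha hb => rw [add_smul, ha, hb, add_zero]
    | smul a b _ hb => rw [smul_assoc, hb, smul_zero]
  obtain ⟨_, _⟩ := exists_module hA hker'
  have key : ∀ n : ℕ, Subsingleton (extGroup A M N (n + 1)) ↔ E.HZ (n + 1 : ℕ) := by
    intro n
    rw [E.hz_iff hA]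
    refine ext_iff_homEx _ _ (D.part_exact hA hD) (D.part_proj hA ?_) (D.partε hA f)
      (D.partε_surj hA hD) (D.partε_exact hA hD) N n
    intro U V _ _ _ _ _ _ _ _ g hg φ
    exact hrel U V (hkill U) (hkill V) g hg φ
  simp only [key]
  rcases E.dich _ hV with h | ⟨m0, h⟩
  · exact Or.inl fun n hn => h _ hn
  · refine Or.inr ⟨m0, ?_⟩
    rcases h with h | h
    · exact Or.inl fun n => h (n + 1)
    · exact Or.inr fun n => h (n + 1)

end Chain


section BaseChangeExt

open TensorProduct

theorem exists_ff_res (A : Type) [CommRing A] [IsNoetherianRing A] (M : Type) [AddCommGroup M]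
    [Module A M] [Module.Finite A M] :
    ∃ (r : ℕ → ℕ) (d : ∀ n, (Fin (r (n + 1)) → A) →ₗ[A] (Fin (r n) → A))
      (ε : (Fin (r 0) → A) →ₗ[A] M), (∀ n, Function.Exact (d (n + 1)) (d n)) ∧
      Function.Surjective ε ∧ Function.Exact (d 0) ε := by
  obtain ⟨r0, ε, hε⟩ := Module.Finite.exists_fin' A M
  have step : ∀ s : (Σ r : ℕ, Submodule A (Fin r → A)), ∃ (r' : ℕ)
      (f : (Fin r' → A) →ₗ[A] (Fin s.1 → A)), LinearMap.range f = s.2 := by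
    intro s
    obtain ⟨r', g, hg⟩ := Module.Finite.exists_fin' A s.2
    refine ⟨r', s.2.subtype ∘ₗ g, ?_⟩
    rw [LinearMap.range_comp, LinearMap.range_eq_top.mpr hg, Submodule.map_top,
      Submodule.range_subtype]
  choose r' f hf using step
  let seq : ℕ → (Σ r : ℕ, Submodule A (Fin r → A)) := fun n =>
    Nat.rec ⟨r0, LinearMap.ker ε⟩ (fun _ s => ⟨r' s, LinearMap.ker (f s)⟩) n
  refine ⟨fun n => (seq n).1, fun n => f (seq n), ε, fun n => ?_, hε, ?_⟩
  · rw [LinearMap.exact_iff]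
    exact (hf (seq (n + 1))).symm
  · rw [LinearMap.exact_iff]
    exact (hf (seq 0)).symm

theorem homEx_iff_exact {A : Type} [CommRing A] (N : Type) [AddCommGroup N] [Module A N]
    (P : ℕ → Type) [∀ n, AddCommGroup (P n)] [∀ n, Module A (P n)]
    (d : ∀ n, P (n + 1) →ₗ[A] P n) (hd : ∀ n, d n ∘ₗ d (n + 1) = 0) (n : ℕ) :
    HomEx N P d n ↔ Function.Exact (LinearMap.lcomp A N (d n)) (LinearMap.lcomp A N (d (n + 1))) := by
  constructor
  · intro h φ
    constructor
    · intro hφ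
      obtain ⟨ψ, hψ⟩ := h φ hφ
      exact ⟨ψ, hψ⟩
    · rintro ⟨ψ, rfl⟩
      change (ψ ∘ₗ d n) ∘ₗ d (n + 1) = 0
      rw [LinearMap.comp_assoc, hd, LinearMap.comp_zero]
  · intro h φ hφ
    obtain ⟨ψ, hψ⟩ := (h φ).mp hφ
    exact ⟨ψ, hψ⟩

theorem hom_square {A B : Type} [CommRing A] [CommRing B] [Algebra A B]
    (N : Type) [AddCommGroup N] [Module A N] {a b : ℕ} (d : (Fin a → A) →ₗ[A] (Fin b → A)) :
    ((LinearMap.lcomp B (B ⊗[A] N) (d.baseChange B)).restrictScalars A) ∘ₗ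
      ((Module.isBaseChange_map_of_finite_free N B (Fin b)).equiv.restrictScalars A).toLinearMap =
    ((Module.isBaseChange_map_of_finite_free N B (Fin a)).equiv.restrictScalars A).toLinearMap ∘ₗ
      LinearMap.lTensor B (LinearMap.lcomp A N d) := by
  refine TensorProduct.ext' fun s φ => ?_
  change LinearMap.lcomp B (B ⊗[A] N) (d.baseChange B)
    ((Module.isBaseChange_map_of_finite_free N B (Fin b)).equiv (s ⊗ₜ φ)) =
    (Module.isBaseChange_map_of_finite_free N B (Fin a)).equiv (s ⊗ₜ (φ ∘ₗ d))
  rw [IsBaseChange.equiv_tmul, IsBaseChange.equiv_tmul, map_smul]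
  congr 1
  simp only [LinearMap.baseChangeHom_apply, LinearMap.baseChange_comp]
  rfl

theorem ext_baseChange {A B : Type} [CommRing A] [IsNoetherianRing A] [CommRing B] [Algebra A B]
    [Module.FaithfullyFlat A B] (M N : Type) [AddCommGroup M] [Module A M] [Module.Finite A M]
    [AddCommGroup N] [Module A N] (n : ℕ) :
    Subsingleton (extGroup A M N (n + 1)) ↔
      Subsingleton (extGroup B (B ⊗[A] M) (B ⊗[A] N) (n + 1)) := by
  obtain ⟨r, d, ε, hd, hε, h0⟩ := exists_ff_res A M
  have hdd : ∀ n, d n ∘ₗ d (n + 1) = 0 := fun n =>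
    LinearMap.ext fun y => (hd n).apply_apply_eq_zero y
  have hdd' : ∀ n, (d n).baseChange B ∘ₗ (d (n + 1)).baseChange B = 0 := fun n => by
    rw [← LinearMap.baseChange_comp, hdd, LinearMap.baseChange_zero]
  have e1 := ext_iff_homEx (fun n => Fin (r n) → A) d hd (fun n => inferInstance) ε hε h0 N n
  have e2 := ext_iff_homEx (A := B) (fun n => B ⊗[A] (Fin (r n) → A))
    (fun n => (d n).baseChange B)
    (fun n => by exact Module.Flat.lTensor_exact B (hd n)) (fun n => inferInstance)
    (ε.baseChange B) (by exact LinearMap.lTensor_surjective B hε)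
    (by exact Module.Flat.lTensor_exact B h0) (B ⊗[A] N) n
  rw [e1, e2, homEx_iff_exact _ _ _ hdd,
    homEx_iff_exact (A := B) _ (fun n => B ⊗[A] (Fin (r n) → A)) (fun n => (d n).baseChange B) hdd',
    ← Module.FaithfullyFlat.lTensor_exact_iff_exact A B]
  exact (Function.Exact.iff_of_ladder_linearEquiv (hom_square N (d n))
    (hom_square N (d (n + 1)))).symm

end BaseChangeExt

theorem completion_dim (A : Type) [CommRing A] [IsNoetherianRing A] [IsLocalRing A]
    [IsNoetherianRing (AdicCompletion (IsLocalRing.maximalIdeal A) A)] :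
    ringKrullDim (AdicCompletion (IsLocalRing.maximalIdeal A) A) ≤ ringKrullDim A := by
  rw [← IsLocalRing.maximalIdeal_height_eq_ringKrullDim,
    ← IsLocalRing.maximalIdeal_height_eq_ringKrullDim]
  have hm := AdicCompletion.maximalIdeal_eq_map (R := A)
  have hl : (IsLocalRing.maximalIdeal (AdicCompletion (IsLocalRing.maximalIdeal A) A)).LiesOver
      (IsLocalRing.maximalIdeal A) := ⟨by
        rw [Ideal.under_def]
        exact (((IsLocalRing.local_hom_TFAE
          (algebraMap A (AdicCompletion (IsLocalRing.maximalIdeal A) A))).out 0 4 rfl rfl).mp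
          (inferInstance : IsLocalHom
            (algebraMap A (AdicCompletion (IsLocalRing.maximalIdeal A) A)))).symm⟩
  have h := Ideal.height_le_height_add_of_liesOver (IsLocalRing.maximalIdeal A)
    (IsLocalRing.maximalIdeal (AdicCompletion (IsLocalRing.maximalIdeal A) A))
  rw [← hm, Ideal.map_quotient_self] at h
  have hb : (⊥ : Ideal ((AdicCompletion (IsLocalRing.maximalIdeal A) A) ⧸
    IsLocalRing.maximalIdeal (AdicCompletion (IsLocalRing.maximalIdeal A) A))).height = 0 := by
    have : IsDomain ((AdicCompletion (IsLocalRing.maximalIdeal A) A) ⧸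
      IsLocalRing.maximalIdeal (AdicCompletion (IsLocalRing.maximalIdeal A) A)) :=
      inferInstance
    exact Ideal.height_bot
  rw [hb, add_zero] at h
  exact_mod_cast h

/-- Let `A` be a commutative Noetherian local ring which is a complete
intersection: there is a regular local ring `S` (a Noetherian local ring whose maximal
ideal is generated by `dim S` elements) and a regular sequence `x 1, …, x c` in the
maximal ideal of `S` such that the maximal-ideal-adic completion of `A` is isomorphic to
`S/(x 1, …, x c)`.  Let `M, N` be finitely generated `A`-modules.  Then either
`Ext_A^n(M,N) = 0` for all `n > dim A`, or there is `m₀ ≥ 0` such that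
`Ext_A^n(M,N) ≠ 0` for all even `n ≥ m₀`, or for all odd `n ≥ m₀`. -/
theorem stmt_8 (A : Type) [CommRing A] [IsNoetherianRing A] [IsLocalRing A]
    (S : Type) [CommRing S] [IsNoetherianRing S] [IsLocalRing S]
    (hreg : ∃ gen : Finset S, IsLocalRing.maximalIdeal S = Ideal.span ↑gen ∧
      (gen.card : WithBot (WithTop ℕ)) = ringKrullDim S)
    (c : ℕ) (x : Fin c → S)
    (hxm : ∀ i, x i ∈ IsLocalRing.maximalIdeal S)
    (hxreg : RingTheory.Sequence.IsRegular S (List.ofFn x))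
    (hcompl : Nonempty
      ((AdicCompletion (IsLocalRing.maximalIdeal A) A) ≃+* S ⧸ Ideal.span (Set.range x)))
    (M N : Type) [AddCommGroup M] [Module A M] [Module.Finite A M]
    [AddCommGroup N] [Module A N] [Module.Finite A N] :
    (∀ n : ℕ, ringKrullDim A < (n : WithBot (WithTop ℕ)) → Subsingleton (extGroup A M N n)) ∨
    ∃ m₀ : ℕ, (∀ n ≥ m₀, Even n → Nontrivial (extGroup A M N n)) ∨
      (∀ n ≥ m₀, Odd n → Nontrivial (extGroup A M N n)) := by
  obtain ⟨gen, hgen, hcard⟩ := hreg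
  obtain ⟨iso⟩ := hcompl
  have hgl := (reg_induct gen.card S hcard.le (fun i => (gen.equivFin.symm i : S)) (by
    rw [hgen]
    congr 1
    ext s
    constructor
    · intro hs
      exact ⟨gen.equivFin ⟨s, hs⟩, by simp⟩
    · rintro ⟨i, rfl⟩
      exact (gen.equivFin.symm i).2)).2
  let x' : ℕ → S := fun i => if h : i < c then x ⟨i, h⟩ else 0
  have hlist : (List.range c).map x' = List.ofFn x := by
    rw [List.map_eq_iff]
    intro i
    by_cases h : i < c <;> simp [x', h]
  have himg : x' '' {i | i < c} = Set.range x := by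
    ext s
    constructor
    · rintro ⟨i, hi, rfl⟩
      have hi' : i < c := hi
      exact ⟨⟨i, hi'⟩, by simp [x', hi']⟩
    · rintro ⟨i, rfl⟩
      exact ⟨i, i.2, by simp [x']⟩
  let B := AdicCompletion (IsLocalRing.maximalIdeal A) A
  let φ : S →+* B := (iso.symm : _ →+* B).comp (Ideal.Quotient.mk (Ideal.span (Set.range x)))
  have hφs : Function.Surjective φ :=
    iso.symm.surjective.comp Ideal.Quotient.mk_surjective
  have hφk : RingHom.ker φ = Ideal.span (x' '' {i | i < c}) := by
    rw [himg]
    ext s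
    rw [RingHom.mem_ker, RingHom.comp_apply, ← Ideal.Quotient.eq_zero_iff_mem]
    exact map_eq_zero_iff iso.symm iso.symm.injective
  have hBn : IsNoetherianRing B := isNoetherianRing_of_surjective S B φ hφs
  have hff : Module.FaithfullyFlat A B := Module.FaithfullyFlat.of_flat_of_isLocalHom
  have hdim : ringKrullDim B + (c : WithBot ℕ∞) = (gen.card : WithBot ℕ∞) := by
    have h := ringKrullDim_add_length_eq_ringKrullDim_of_isRegular (List.ofFn x) hxreg
    rw [List.length_ofFn] at h
    have h2 : Ideal.ofList (List.ofFn x) = Ideal.span (Set.range x) := by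
      unfold Ideal.ofList
      congr 1
      ext s
      simp [List.mem_ofFn]
    rw [h2] at h
    rw [ringKrullDim_eq_of_ringEquiv iso, h]
    exact hcard.symm
  have hBA : ringKrullDim B ≤ ringKrullDim A := completion_dim A
  have hA0 : (0 : WithBot ℕ∞) ≤ ringKrullDim A := ringKrullDim_nonneg_of_nontrivial
  let alg : Algebra S B := φ.toAlgebra
  have main := @ci_dich S _ x' _ c gen.card B _ alg hφs hφk
    (by rw [hlist]; exact hxreg.toIsWeaklyRegular) hgl
    (TensorProduct A B M) (TensorProduct A B N) _ _ _ _ _ _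
  rcases main with h | ⟨m0, h | h⟩
  · left
    intro n hn
    have hn0 : n ≠ 0 := by
      rintro rfl
      exact absurd (hA0.trans_lt hn) (lt_irrefl _)
    obtain ⟨k, rfl⟩ := Nat.exists_eq_succ_of_ne_zero hn0
    refine (ext_baseChange (B := B) M N k).mpr (h k ?_)
    have h1 : ringKrullDim B < ((k + 1 : ℕ) : WithBot ℕ∞) := hBA.trans_lt hn
    have h2 : (gen.card : WithBot ℕ∞) < ((k + 1 + c : ℕ) : WithBot ℕ∞) := by
      rw [← hdim]
      revert h1
      generalize ringKrullDim B = D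
      intro h1
      induction D with
      | bot => exact WithBot.bot_lt_coe _
      | coe D =>
        induction D with
        | top => exact absurd h1 (not_lt.mpr le_top)
        | coe D =>
          have h3 : D < k + 1 := by exact_mod_cast h1
          have h4 : D + c < k + 1 + c := by omega
          exact_mod_cast h4
    have h3 : gen.card < k + 1 + c := by exact_mod_cast h2
    omega
  · right
    refine ⟨max m0 1, Or.inl fun n hn he => ?_⟩
    obtain ⟨k, rfl⟩ := Nat.exists_eq_succ_of_ne_zero (n := n) (by omega)
    rw [← not_subsingleton_iff_nontrivial, ext_baseChange (B := B) M N k]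
    exact h k (by omega) he
  · right
    refine ⟨max m0 1, Or.inr fun n hn he => ?_⟩
    obtain ⟨k, rfl⟩ := Nat.exists_eq_succ_of_ne_zero (n := n) (by omega)
    rw [← not_subsingleton_iff_nontrivial, ext_baseChange (B := B) M N k]
    exact h k (by omega) he
end
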